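/- arXiv:1904.00808 — 2 statements merged into one kernel-verified Lean document; each statement's English description precedes it below -/
import Mathlib

section
/- Let (X,d,μ) be a metric measure space with finite Hausdorff dimension. Suppose there exists C ≥ 1 such that for every Lipschitz function f : X → ℝ and every upper gradient ρ of f, one has Lip(f,x) ≤ C·ρ(x) for μ-almost every x ∈ X. Then (X,d,μ) is a Lipschitz differentiability space; moreover, the charts can be chosen so that every chart dimension n_i satisfies n_i ≤ dim_H X. -/
open MeasureTheory Metric Set Filter Topology ENNReal NNReal
open scoped RealInnerProductSpace

noncomputable section

namespace BKO

/-- `ℝⁿ` with the Euclidean metric. -/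
abbrev E (n : ℕ) : Type := EuclideanSpace ℝ (Fin n)

variable {X : Type*} [MetricSpace X]

/-- A set `G ⊆ ℝ × X` is the graph of a curve fragment if all first coordinates lie
in `[0,1]` and it is the graph of a `2`-biLipschitz function defined on a subset of `[0,1]`. -/
def IsFragmentGraph (X : Type*) [MetricSpace X] (G : Set (ℝ × X)) : Prop :=
  (∀ p ∈ G, p.1 ∈ Set.Icc (0:ℝ) 1) ∧
  ∀ p ∈ G, ∀ q ∈ G, |p.1 - q.1| ≤ 2 * dist p.2 q.2 ∧ dist p.2 q.2 ≤ 2 * |p.1 - q.1|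

/-- The space `Γ(X)` of curve fragments, identified with their graphs (nonempty compact
subsets of `[0,1] × X`), with the Hausdorff metric `d_Γ(γ₁,γ₂) = d_H(gr γ₁, gr γ₂)`. -/
def Fragment (X : Type*) [MetricSpace X] : Type _ :=
  {G : TopologicalSpace.NonemptyCompacts (ℝ × X) // IsFragmentGraph X (G : Set (ℝ × X))}

instance : MetricSpace (Fragment X) :=
  inferInstanceAs (MetricSpace {G : TopologicalSpace.NonemptyCompacts (ℝ × X) // _})

instance : MeasurableSpace (Fragment X) := borel _
instance : BorelSpace (Fragment X) := ⟨rfl⟩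

namespace Fragment

/-- The graph of a curve fragment. -/
def graph (γ : Fragment X) : Set (ℝ × X) := (γ.1 : Set (ℝ × X))

/-- The (compact) domain of a curve fragment. -/
def dom (γ : Fragment X) : Set ℝ := Prod.fst '' γ.graph

/-- The image of a curve fragment. -/
def im (γ : Fragment X) : Set X := Prod.snd '' γ.graph

/-- The function `dom γ → X` determined by the graph (junk value off the domain). -/
def fn (γ : Fragment X) (t : ℝ) : X :=
  @dite X (∃ x, (t, x) ∈ γ.graph) (Classical.dec _)
    (fun h => h.choose) (fun _ => γ.1.nonempty.choose.2)

/-- `γ_* 𝓛¹`: the pushforward under `γ` of Lebesgue measure restricted to `dom γ`. -/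
def measure [MeasurableSpace X] (γ : Fragment X) : Measure X :=
  (volume.restrict γ.dom).map γ.fn

end Fragment

/-- The measure `ν(ℙ)`, `ν(ℙ)(B) = ∫ γ_*𝓛¹(B) dℙ(γ)`. -/
def nu [MeasurableSpace X] (ℙ : Measure (Fragment X)) : Measure X :=
  ℙ.bind Fragment.measure

/-- The cone `C(w,θ) = {v : |⟨v,w⟩| ≥ θ‖v‖}`. -/
def cone {n : ℕ} (w : E n) (θ : ℝ) : Set (E n) := {v | θ * ‖v‖ ≤ |⟪v, w⟫|}

/-- A cone in `ℝⁿ` is a set of the form `C(w,θ)` with `w ∈ Sⁿ⁻¹`, `θ ∈ (0,1)`. -/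
def IsCone {n : ℕ} (C : Set (E n)) : Prop :=
  ∃ (w : E n) (θ : ℝ), ‖w‖ = 1 ∧ θ ∈ Set.Ioo (0:ℝ) 1 ∧ C = cone w θ

/-- `γ` is a `C`-curve with respect to `φ`. -/
def IsConeCurve {n : ℕ} (φ : X → E n) (C : Set (E n)) (γ : Fragment X) : Prop :=
  ∃ δ > (0:ℝ), ∀ p ∈ γ.graph, ∀ q ∈ γ.graph,
    φ p.2 - φ q.2 ∈ C \ Metric.ball 0 (δ * |p.1 - q.1|)

/-- `ℙ` is a `C`-Alberti representation of `μ` with respect to `φ`. -/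
def IsConeAlbertiRep [MeasurableSpace X] {n : ℕ} (μ : Measure X) (φ : X → E n)
    (C : Set (E n)) (ℙ : Measure (Fragment X)) : Prop :=
  IsProbabilityMeasure ℙ ∧ μ ≪ nu ℙ ∧ ∀ᵐ γ ∂ℙ, IsConeCurve φ C γ

/-- `S` is `C`-null with respect to `φ`: every `C`-curve meets `S` in `𝓗¹`-measure zero. -/
def ConeNull [MeasurableSpace X] [BorelSpace X] {n : ℕ} (φ : X → E n) (C : Set (E n))
    (S : Set X) : Prop :=
  ∀ γ : Fragment X, IsConeCurve φ C γ → μH[1] (γ.im ∩ S) = 0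

/-- Cones `C₁,…,C_m` are independent. -/
def IndepCones {n m : ℕ} (C : Fin m → Set (E n)) : Prop :=
  ∀ v : Fin m → E n, (∀ i, v i ∈ C i ∧ v i ≠ 0) → LinearIndependent ℝ v

/-- `μ` has `n` independent Alberti representations. -/
def HasIndepAlberti [MeasurableSpace X] (μ : Measure X) (n : ℕ) : Prop :=
  ∃ φ : X → E n, (∃ K, LipschitzWith K φ) ∧ ∃ C : Fin n → Set (E n),
    (∀ i, IsCone (C i)) ∧ IndepCones C ∧ ∀ i, ∃ ℙ, IsConeAlbertiRep μ φ (C i) ℙ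

/-- The collection `𝒮(φ)` of singular sets. -/
def MemScal [MeasurableSpace X] [BorelSpace X] {n : ℕ} (φ : X → E n) (S : Set X) : Prop :=
  MeasurableSet S ∧ ∀ θ ∈ Set.Ioo (0:ℝ) 1, ∃ (m : ℕ) (S' : Fin m → Set X) (w : Fin m → E n),
    S = (⋃ i, S' i) ∧ ∀ i, MeasurableSet (S' i) ∧ ‖w i‖ = 1 ∧ ConeNull φ (cone (w i) θ) (S' i)

/-- `Lip(f,x) = limsup_{r→0⁺} sup_{d(x,y)≤r} |f(y)-f(x)|/r`. -/
def lipAt (f : X → ℝ) (x : X) : ℝ :=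
  Filter.limsup (fun r : ℝ => sSup ((fun y => |f y - f x| / r) '' Metric.closedBall x r))
    (𝓝[>] (0:ℝ))

/-- `ind φ = {x : Lip(D⬝φ, x) > 0 for all D ∈ Sⁿ⁻¹}`. -/
def indSet {n : ℕ} (φ : X → E n) : Set X :=
  {x | ∀ D : E n, ‖D‖ = 1 → 0 < lipAt (fun y => ⟪φ y, D⟫) x}

/-- `f` is differentiable with respect to `φ` at `x₀`, with a unique derivative. -/
def DiffWrtAt {n : ℕ} (φ : X → E n) (f : X → ℝ) (x₀ : X) : Prop :=
  ∃! L : E n →ₗ[ℝ] ℝ,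
    Filter.Tendsto (fun x => |f x - f x₀ - L (φ x - φ x₀)| / dist x x₀) (𝓝[≠] x₀) (𝓝 0)

/-- `(X,d,μ)` is a Lipschitz differentiability space, with all chart dimensions
satisfying the predicate `P`. -/
def IsLipDiffSpaceWith [MeasurableSpace X] (μ : Measure X) (P : ℕ → Prop) : Prop :=
  ∃ (N : ℕ → ℕ) (U : ℕ → Set X) (φ : (i : ℕ) → X → E (N i)),
    (∀ i, P (N i)) ∧ (∀ i, MeasurableSet (U i)) ∧ (⋃ i, U i) = Set.univ ∧
    (∀ i, ∃ K, LipschitzWith K (φ i)) ∧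
    ∀ f : X → ℝ, (∃ K, LipschitzWith K f) →
      ∀ i, ∀ᵐ x ∂μ, x ∈ U i → DiffWrtAt (φ i) f x

/-- `ρ` is an upper gradient of `f`. -/
def IsUpperGradient (f ρ : X → ℝ) : Prop :=
  ∀ γ : ℝ → X, LipschitzOnWith 1 γ (Set.Icc 0 1) →
    |f (γ 1) - f (γ 0)| ≤ ∫ t in Set.Icc (0:ℝ) 1, ρ (γ t)

/-- `ρ` is a `*`-upper gradient of `f`. -/
def IsStarUpperGradient (f ρ : X → ℝ) : Prop :=
  ∀ γ : Fragment X, LipschitzOnWith 1 γ.fn γ.dom →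
    ∀ᵐ t ∂(volume.restrict γ.dom),
      ∀ v : ℝ, HasDerivWithinAt (f ∘ γ.fn) v γ.dom t → |v| ≤ ρ (γ.fn t)

/-- The dyadic cube of side length `2^{-m}` in `[0,1)ⁿ` indexed by `k`. -/
def dyadicCube (n m : ℕ) (k : Fin n → Fin (2 ^ m)) : Set (E n) :=
  {x | ∀ i, (k i : ℝ) / 2 ^ m ≤ x i ∧ x i < ((k i : ℝ) + 1) / 2 ^ m}

open scoped Finset in
/-- If every axis-parallel line through a point of `S` contains at least `t` points of `S`,
then `S` has at least `t ^ n` points. -/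
lemma pow_le_card_of_lines {n t : ℕ} (S : Finset (Fin n → ℤ)) (hS : S.Nonempty)
    (h : ∀ x ∈ S, ∀ i, t ≤ #{y ∈ S | ∀ l, l ≠ i → y l = x l}) : t ^ n ≤ #S := by
  have key : ∀ k ≤ n, ∀ x ∈ S, t ^ k ≤ #{y ∈ S | ∀ l : Fin n, k ≤ l → y l = x l} := by
    intro k
    induction k with
    | zero =>
      intro _ x hx
      rw [pow_zero, Nat.one_le_iff_ne_zero, Finset.card_ne_zero]
      exact ⟨x, by simp [hx]⟩
    | succ k ih =>
      intro hk x hx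
      let i : Fin n := ⟨k, hk⟩
      let Lx : Finset (Fin n → ℤ) := {y ∈ S | ∀ l, l ≠ i → y l = x l}
      let B : (Fin n → ℤ) → Finset (Fin n → ℤ) :=
        fun y => {z ∈ S | ∀ l : Fin n, k ≤ l → z l = y l}
      have hdisj : (Lx : Set (Fin n → ℤ)).PairwiseDisjoint B := by
        intro y hy y' hy' hne
        refine Finset.disjoint_left.2 fun z hz hz' => hne ?_
        simp only [Lx, B, Finset.coe_filter, Finset.mem_filter, mem_ofPred_eq] at hy hy' hz hz'
        funext l
        by_cases hl : l = i
        · subst hl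
          rw [← hz.2 i le_rfl, hz'.2 i le_rfl]
        · rw [hy.2 l hl, hy'.2 l hl]
      have hsub : Lx.biUnion B ⊆ ({y ∈ S | ∀ l : Fin n, k + 1 ≤ l → y l = x l} : Finset _) := by
        intro z hz
        simp only [Lx, B, Finset.mem_biUnion, Finset.mem_filter] at hz ⊢
        obtain ⟨y, ⟨hy, hy2⟩, hz1, hz2⟩ := hz
        refine ⟨hz1, fun l hl => ?_⟩
        rw [hz2 l (by omega), hy2 l]
        rintro rfl
        simp [i] at hl
      calc t ^ (k + 1) = t * t ^ k := by ring
        _ ≤ #Lx * t ^ k := Nat.mul_le_mul_right _ (h x hx i)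
        _ ≤ ∑ y ∈ Lx, #(B y) := by
          rw [← smul_eq_mul]
          exact Finset.card_nsmul_le_sum _ _ _ fun y hy =>
            ih (by omega) y (Finset.mem_filter.1 hy).1
        _ = #(Lx.biUnion B) := (Finset.card_biUnion hdisj).symm
        _ ≤ _ := Finset.card_le_card hsub
  obtain ⟨x, hx⟩ := hS
  exact (key n le_rfl x hx).trans (Finset.card_filter_le _ _)

open scoped Finset in
/-- A set of fewer than `t ^ n` lattice points can be coloured by the `n` coordinate directions
so that each line in direction `i` contains at most `t` points of colour `i`. -/
lemma exists_directional_colouring {n t : ℕ} [NeZero n] (S : Finset (Fin n → ℤ))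
    (hS : #S < t ^ n) : ∃ lab : (Fin n → ℤ) → Fin n, ∀ (i : Fin n) (y : Fin n → ℤ),
      #{u ∈ S | lab u = i ∧ ∀ l, l ≠ i → u l = y l} ≤ t := by
  induction S using Finset.strongInduction with
  | H S ih =>
    rcases S.eq_empty_or_nonempty with rfl | hne
    · exact ⟨fun _ => 0, by simp⟩
    have : ∃ x ∈ S, ∃ i, #{y ∈ S | ∀ l, l ≠ i → y l = x l} ≤ t := by
      by_contra! hcon
      exact absurd (pow_le_card_of_lines S hne fun x hx i => (hcon x hx i).le) (by omega)
    obtain ⟨x, hx, i, hi⟩ := this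
    let L : Finset (Fin n → ℤ) := {y ∈ S | ∀ l, l ≠ i → y l = x l}
    have hxL : x ∈ L := by simp [L, hx]
    have hss : S \ L ⊂ S := Finset.sdiff_ssubset (Finset.filter_subset _ _) ⟨x, hxL⟩
    obtain ⟨lab, hlab⟩ := ih (S \ L) hss ((Finset.card_lt_card hss).trans hS)
    refine ⟨fun u => if u ∈ L then i else lab u, fun j y => ?_⟩
    by_cases hcase : j = i ∧ ∀ l, l ≠ i → x l = y l
    · obtain ⟨rfl, hy⟩ := hcase
      refine (Finset.card_le_card fun u hu => ?_).trans hi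
      simp only [Finset.mem_filter] at hu ⊢
      exact ⟨hu.1, fun l hl => (hu.2.2 l hl).trans (hy l hl).symm⟩
    · refine (Finset.card_le_card fun u hu => ?_).trans (hlab j y)
      simp only [Finset.mem_filter, Finset.mem_sdiff] at hu ⊢
      have huL : u ∉ L := by
        intro huL
        rw [if_pos huL] at hu
        obtain rfl := hu.2.1
        refine hcase ⟨rfl, fun l hl => ?_⟩
        rw [← hu.2.2 l hl, (Finset.mem_filter.1 huL).2 l hl]
      rw [if_neg huL] at hu
      exact ⟨⟨hu.1, huL⟩, hu.2⟩

/-- The index of the grid cube, `j` generations coarser, that contains the cube of index `Q`. -/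
def ancestor {n : ℕ} (b j : ℕ) (Q : Fin n → ℤ) : Fin n → ℤ := fun l => Q l / (b : ℤ) ^ j

lemma ancestor_zero {n : ℕ} (b : ℕ) (Q : Fin n → ℤ) : ancestor b 0 Q = Q := by
  funext l; simp [ancestor]

lemma ancestor_ancestor {n : ℕ} (b i j : ℕ) (Q : Fin n → ℤ) :
    ancestor b i (ancestor b j Q) = ancestor b (j + i) Q := by
  funext l
  simp only [ancestor, pow_add]
  exact Int.ediv_ediv_of_nonneg (by positivity)

open scoped Finset in
/-- The nodes of the tree of grid cubes generated by a finite set `𝒬` of leaves can be partially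
coloured by directions so that, among the children of any node, each line in direction `i` has at
most `t` children of colour `i`, while few nodes on the path to any leaf are uncoloured. -/
lemma exists_tree_colouring {n b t : ℕ} [NeZero n] (ht : 2 ≤ t)
    (𝒬 : Finset (Fin n → ℤ)) : ∃ lab : ℕ → (Fin n → ℤ) → Option (Fin n),
      (∀ (j : ℕ) (i : Fin n) (v y : Fin n → ℤ) (U : Finset (Fin n → ℤ)),
        (∀ u ∈ U, ancestor b 1 u = v ∧ lab j u = some i ∧ ∀ l, l ≠ i → u l = y l) → #U ≤ t) ∧
      ∀ Q ∈ 𝒬, ∀ m, (t ^ n) ^ #{j ∈ Finset.range m | lab j (ancestor b j Q) = none} ≤ #𝒬 := by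
  classical
  set R := t ^ n with hR
  have hR2 : 1 < R := Nat.one_lt_pow (NeZero.ne n) ht
  let N : ℕ → (Fin n → ℤ) → ℕ := fun j u => #{Q ∈ 𝒬 | ancestor b j Q = u}
  let g : ℕ → (Fin n → ℤ) → ℕ := fun j u => Nat.log R (N j u)
  let S : ℕ → (Fin n → ℤ) → Finset (Fin n → ℤ) := fun j v =>
    {u ∈ 𝒬.image (ancestor b j) | ancestor b 1 u = v ∧ g j u = g (j + 1) v}
  have hS : ∀ j v, #(S j v) < t ^ n := by
    intro j v
    have hsum : ∑ u ∈ S j v, N j u ≤ N (j + 1) v := by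
      rw [← Finset.card_biUnion]
      · refine Finset.card_le_card fun Q hQ => ?_
        simp only [S, Finset.mem_biUnion, Finset.mem_filter] at hQ ⊢
        obtain ⟨u, ⟨-, hu, -⟩, hQ, rfl⟩ := hQ
        exact ⟨hQ, by rw [← hu, ancestor_ancestor]⟩
      · intro u _ u' _ hne
        refine Finset.disjoint_left.2 fun Q hQ hQ' => hne ?_
        rw [← (Finset.mem_filter.1 hQ).2, ← (Finset.mem_filter.1 hQ').2]
    have hlow : #(S j v) * R ^ g (j + 1) v ≤ ∑ u ∈ S j v, N j u := by
      rw [← smul_eq_mul]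
      refine Finset.card_nsmul_le_sum _ _ _ fun u hu => ?_
      obtain ⟨hu1, -, hu2⟩ := Finset.mem_filter.1 hu
      rw [← hu2]
      refine Nat.pow_log_le_self _ ?_
      obtain ⟨Q, hQ, rfl⟩ := Finset.mem_image.1 hu1
      exact Finset.card_ne_zero.2 ⟨Q, by simp [hQ]⟩
    have hup : N (j + 1) v < R ^ (g (j + 1) v + 1) := Nat.lt_pow_succ_log_self hR2 _
    rw [pow_succ'] at hup
    exact lt_of_mul_lt_mul_right ((hlow.trans hsum).trans_lt hup) (Nat.zero_le _)
  choose lab hlab using fun j v => exists_directional_colouring (S j v) (hS j v)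
  refine ⟨fun j u => if u ∈ S j (ancestor b 1 u) then some (lab j (ancestor b 1 u) u) else none,
    ?_, ?_⟩
  · intro j i v y U hU
    refine (Finset.card_le_card fun u hu => ?_).trans (hlab j v i y)
    obtain ⟨rfl, h2, h3⟩ := hU u hu
    simp only at h2
    split_ifs at h2 with hmem
    exact Finset.mem_filter.2 ⟨hmem, Option.some.inj h2, h3⟩
  · intro Q hQ m
    have hmono : ∀ j, g j (ancestor b j Q) ≤ g (j + 1) (ancestor b (j + 1) Q) := by
      intro j
      refine Nat.log_mono_right (Finset.card_le_card fun Q' hQ' => ?_)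
      obtain ⟨h1, h2⟩ := Finset.mem_filter.1 hQ'
      refine Finset.mem_filter.2 ⟨h1, ?_⟩
      rw [← ancestor_ancestor, h2, ancestor_ancestor]
    have hcount : ∀ m, #{j ∈ Finset.range m | (if ancestor b j Q ∈ S j (ancestor b 1
        (ancestor b j Q)) then some (lab j (ancestor b 1 (ancestor b j Q)) (ancestor b j Q))
        else none) = none} ≤ g m (ancestor b m Q) := by
      intro m
      induction m with
      | zero => simp
      | succ m ih =>
        rw [Finset.range_add_one, Finset.filter_insert]
        by_cases h1 : ancestor b m Q ∈ S m (ancestor b 1 (ancestor b m Q))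
        · rw [if_neg (by simp [h1])]
          exact ih.trans (hmono m)
        · rw [if_pos (by simp [h1]), Finset.card_insert_of_notMem (by simp)]
          refine Nat.succ_le_of_lt (ih.trans_lt (lt_of_le_of_ne (hmono m) fun he => h1 ?_))
          refine Finset.mem_filter.2 ⟨Finset.mem_image_of_mem _ hQ, rfl, ?_⟩
          rw [he, ancestor_ancestor]
    have hN : N m (ancestor b m Q) ≠ 0 := Finset.card_ne_zero.2 ⟨Q, by simp [hQ]⟩
    calc _ ≤ R ^ g m (ancestor b m Q) := Nat.pow_le_pow_right (by omega) (hcount m)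
      _ ≤ N m (ancestor b m Q) := Nat.pow_log_le_self _ hN
      _ ≤ #𝒬 := Finset.card_filter_le _ _

open scoped Finset in
/-- If the coordinates of the points of `U` other than the `i`-th vary by at most one, then `U` is
contained in at most `2 ^ n` lines in direction `i`. -/
lemma card_le_of_transversal {n k : ℕ} {i : Fin n} (U : Finset (Fin n → ℤ))
    (hU : ∀ u ∈ U, ∀ u' ∈ U, ∀ l, l ≠ i → |u l - u' l| ≤ 1)
    (hk : ∀ y : Fin n → ℤ, #{u ∈ U | ∀ l, l ≠ i → u l = y l} ≤ k) : #U ≤ k * 2 ^ n := by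
  have := Finset.card_le_mul_card_image_of_maps_to (s := U)
    (f := fun u : Fin n → ℤ => fun l => decide (u l % 2 = 0)) (t := Finset.univ)
    (fun _ _ => Finset.mem_univ _) k ?_
  · simpa using this
  · intro p _
    by_cases hne : ∃ u₀ ∈ U, (fun l => decide (u₀ l % 2 = 0)) = p
    · obtain ⟨u₀, hu₀, rfl⟩ := hne
      refine (Finset.card_le_card fun u hu => ?_).trans (hk u₀)
      obtain ⟨hu, hpar⟩ := Finset.mem_filter.1 hu
      refine Finset.mem_filter.2 ⟨hu, fun l hl => ?_⟩
      have h1 := abs_le.1 (hU u hu u₀ hu₀ l hl)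
      have h2 := congrFun hpar l
      simp only [decide_eq_decide] at h2
      omega
    · push Not at hne
      rw [Finset.filter_eq_empty_iff.2 fun u hu => hne u hu]
      simp

open scoped Finset in
/-- Weighted count of the cubes in `S`, whose pattern is that of a curve almost parallel to the
`i`-th axis: each node of colour `i` on the path to a cube contributes a factor `c`. -/
lemma sum_colour_weight_le {n b c t : ℕ} {i : Fin n} (hb : 0 < b) (hbct : b = c * t)
    (lab : ℕ → (Fin n → ℤ) → Option (Fin n))
    (hlab : ∀ (j : ℕ) (v y : Fin n → ℤ) (U : Finset (Fin n → ℤ)),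
      (∀ u ∈ U, ancestor b 1 u = v ∧ lab j u = some i ∧ ∀ l, l ≠ i → u l = y l) → #U ≤ t)
    (S : Finset (Fin n → ℤ)) (m : ℕ)
    (hS : ∀ j < m, ∀ Q ∈ S, ∀ Q' ∈ S, ancestor b (j + 1) Q = ancestor b (j + 1) Q' →
      ∀ l, l ≠ i → |ancestor b j Q l - ancestor b j Q' l| ≤ 1) :
    ∀ h ≤ m, ∀ v, ∑ Q ∈ S with ancestor b h Q = v,
      c ^ #{j ∈ Finset.range h | lab j (ancestor b j Q) = some i} ≤ (2 ^ (n + 1) * b) ^ h := by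
  classical
  intro h
  induction h with
  | zero =>
    intro _ v
    simp only [ancestor_zero, Finset.range_zero, Finset.filter_empty, Finset.card_empty, pow_zero,
      Finset.sum_const, smul_eq_mul, mul_one]
    refine Finset.card_le_one.2 fun a ha a' ha' => ?_
    rw [(Finset.mem_filter.1 ha).2, (Finset.mem_filter.1 ha').2]
  | succ h ih =>
    intro hm v
    let T : Finset (Fin n → ℤ) := {Q ∈ S | ancestor b (h + 1) Q = v}
    let U : Finset (Fin n → ℤ) := T.image (ancestor b h)
    have hUv : ∀ u ∈ U, ancestor b 1 u = v := by
      intro u hu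
      obtain ⟨Q, hQ, rfl⟩ := Finset.mem_image.1 hu
      rw [ancestor_ancestor]
      exact (Finset.mem_filter.1 hQ).2
    have htrans : ∀ u ∈ U, ∀ u' ∈ U, ∀ l, l ≠ i → |u l - u' l| ≤ 1 := by
      intro u hu u' hu'
      obtain ⟨Q, hQ, rfl⟩ := Finset.mem_image.1 hu
      obtain ⟨Q', hQ', rfl⟩ := Finset.mem_image.1 hu'
      obtain ⟨hQ1, hQ2⟩ := Finset.mem_filter.1 hQ
      obtain ⟨hQ1', hQ2'⟩ := Finset.mem_filter.1 hQ'
      exact hS h (by omega) Q hQ1 Q' hQ1' (hQ2.trans hQ2'.symm)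
    have hU : #U ≤ b * 2 ^ n := by
      refine card_le_of_transversal U htrans fun y => ?_
      have hcard : #(Finset.Ico (v i * b) (v i * b + b)) = b := by simp
      rw [← hcard]
      refine Finset.card_le_card_of_injOn (fun u => u i) (fun u hu => ?_) fun u hu u' hu' he => ?_
      · have h1 : u i / (b : ℤ) = v i := by
          have := congrFun (hUv u (Finset.mem_filter.1 hu).1) i
          simpa [ancestor] using this
        have hb' : (0 : ℤ) < b := by exact_mod_cast hb
        have h2 := Int.emod_add_mul_ediv (u i) b
        have h3 := Int.emod_nonneg (u i) hb'.ne'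
        have h4 := Int.emod_lt_of_pos (u i) hb'
        rw [h1] at h2
        simp only [Finset.coe_Ico, mem_Ico]
        constructor <;> nlinarith
      · funext l
        by_cases hl : l = i
        · rw [hl]; exact he
        · rw [(Finset.mem_filter.1 hu).2 l hl, (Finset.mem_filter.1 hu').2 l hl]
    have hUi : #{u ∈ U | lab h u = some i} ≤ t * 2 ^ n := by
      refine card_le_of_transversal _ (fun u hu u' hu' => htrans u (Finset.mem_filter.1 hu).1 u'
        (Finset.mem_filter.1 hu').1) fun y => hlab h v y _ fun u hu => ?_
      simp only [Finset.mem_filter] at hu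
      exact ⟨hUv u hu.1.1, hu.1.2, hu.2⟩
    have hmaps : ∀ Q ∈ T, ancestor b h Q ∈ U := fun Q hQ => Finset.mem_image_of_mem _ hQ
    change ∑ Q ∈ T, _ ≤ _
    rw [← Finset.sum_fiberwise_of_maps_to hmaps]
    calc ∑ u ∈ U, ∑ Q ∈ T with ancestor b h Q = u,
          c ^ #{j ∈ Finset.range (h + 1) | lab j (ancestor b j Q) = some i}
        ≤ ∑ u ∈ U, (1 + if lab h u = some i then c else 0) * (2 ^ (n + 1) * b) ^ h := by
          refine Finset.sum_le_sum fun u hu => ?_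
          refine le_trans ?_ (Nat.mul_le_mul_left _ (ih (by omega) u))
          rw [Finset.mul_sum]
          refine le_trans (Finset.sum_le_sum fun Q hQ => ?_)
            (Finset.sum_le_sum_of_subset (s := {Q ∈ T | ancestor b h Q = u}) ?_)
          · rw [Finset.range_add_one, Finset.filter_insert, (Finset.mem_filter.1 hQ).2]
            split_ifs with h1
            · rw [Finset.card_insert_of_notMem (by simp), pow_succ']
              exact Nat.mul_le_mul_right _ (by omega)
            · simp
          · exact Finset.filter_subset_filter _ (Finset.filter_subset _ _)
      _ = (#U + c * #{u ∈ U | lab h u = some i}) * (2 ^ (n + 1) * b) ^ h := by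
          rw [← Finset.sum_mul, Finset.sum_add_distrib, ← Finset.sum_filter, Finset.sum_const,
            Finset.sum_const]
          simp [mul_comm]
      _ ≤ (b * 2 ^ n + c * (t * 2 ^ n)) * (2 ^ (n + 1) * b) ^ h := by gcongr
      _ = (2 ^ (n + 1) * b) ^ (h + 1) := by rw [← mul_assoc, ← hbct]; ring

/-- The gain per generation in the directional decomposition. -/
def gain (n e : ℕ) : ℕ := 2 ^ ((n + 2) * (n * (e + 1)))

/-- The ratio of consecutive scales in the directional decomposition. -/
def gridBase (n e : ℕ) : ℕ := gain n e ^ (e + 2)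

lemma gain_pos (n e : ℕ) : 0 < gain n e := by unfold gain; positivity

lemma two_le_gain (n e : ℕ) [NeZero n] : 2 ≤ gain n e := by
  have : 0 < n := Nat.pos_of_ne_zero (NeZero.ne n)
  calc 2 = 2 ^ 1 := rfl
    _ ≤ _ := Nat.pow_le_pow_right (by norm_num) (Nat.one_le_iff_ne_zero.2 (by positivity))

lemma two_le_gridBase (n e : ℕ) [NeZero n] : 2 ≤ gridBase n e :=
  (two_le_gain n e).trans (Nat.le_self_pow (by omega) _)

open scoped Finset in
/-- A family of grid cubes of generation `m` of dimension less than `n` can be coloured by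
directions so that every curve almost parallel to the `i`-th axis meets few cubes of colour `i`. -/
lemma exists_cube_colouring {n e K : ℕ} [NeZero n]
    (𝒬 : Finset (Fin n → ℤ)) (m : ℕ) (h𝒬 : #𝒬 ≤ K * gain n e ^ (n * e * m)) :
    ∃ ty : (Fin n → ℤ) → Fin n, ∀ (i : Fin n) (S : Finset (Fin n → ℤ)), S ⊆ 𝒬 →
      (∀ Q ∈ S, ty Q = i) →
      (∀ Q ∈ S, ∀ Q' ∈ S, ancestor (gridBase n e) m Q = ancestor (gridBase n e) m Q') →
      (∀ j < m, ∀ Q ∈ S, ∀ Q' ∈ S,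
        ancestor (gridBase n e) (j + 1) Q = ancestor (gridBase n e) (j + 1) Q' →
        ∀ l, l ≠ i → |ancestor (gridBase n e) j Q l - ancestor (gridBase n e) j Q' l| ≤ 1) →
      #S * 2 ^ m ≤ K * gridBase n e ^ m := by
  classical
  have hn : 0 < n := Nat.pos_of_ne_zero (NeZero.ne n)
  set c := gain n e with hc
  set b := gridBase n e with hb
  have hc0 : 0 < c := gain_pos n e
  have hbct : b = c * c ^ (e + 1) := by rw [hb, gridBase, ← hc]; ring
  have ht : 2 ≤ c ^ (e + 1) := (two_le_gain n e).trans (Nat.le_self_pow (by omega) _)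
  obtain ⟨lab, hlab, hfew⟩ := exists_tree_colouring (b := b) ht 𝒬
  let k : Option (Fin n) → (Fin n → ℤ) → ℕ :=
    fun o Q => #{j ∈ Finset.range m | lab j (ancestor b j Q) = o}
  have hsum : ∀ Q, k none Q + ∑ i, k (some i) Q = m := by
    intro Q
    have := Finset.card_eq_sum_card_fiberwise (s := Finset.range m)
      (f := fun j => lab j (ancestor b j Q)) (t := Finset.univ) (by simp)
    rw [Finset.card_range, Fintype.sum_option] at this
    exact this.symm
  have hpig : ∀ Q, ∃ i, m ≤ n * k (some i) Q + k none Q := by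
    intro Q
    by_contra! hcon
    have h1 : ∑ i : Fin n, (n * k (some i) Q + k none Q) < ∑ _i : Fin n, m :=
      Finset.sum_lt_sum_of_nonempty ⟨0, Finset.mem_univ _⟩ fun i _ => hcon i
    rw [Finset.sum_add_distrib, ← Finset.mul_sum, Finset.sum_const, Finset.sum_const,
      Finset.card_univ, Fintype.card_fin, smul_eq_mul, smul_eq_mul, ← mul_add, add_comm,
      hsum] at h1
    exact lt_irrefl _ h1
  choose ty hty using hpig
  refine ⟨ty, fun i S hS𝒬 hSi hroot hS => ?_⟩
  rcases S.eq_empty_or_nonempty with rfl | ⟨Q₀, hQ₀⟩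
  · simp
  have hweight : ∀ Q ∈ S, 2 ^ ((n + 2) * m) ≤ K * c ^ k (some i) Q := by
    intro Q hQ
    have h1 : m ≤ n * k (some i) Q + k none Q := by simpa [hSi Q hQ] using hty Q
    have h2 : c ^ ((e + 1) * k none Q) ≤ K * c ^ (e * m) := by
      refine (Nat.pow_le_pow_iff_left hn.ne').1 ?_
      calc (c ^ ((e + 1) * k none Q)) ^ n = ((c ^ (e + 1)) ^ n) ^ k none Q := by
            rw [← pow_mul, ← pow_mul, ← pow_mul]; congr 1; ring
        _ ≤ #𝒬 := hfew Q (hS𝒬 hQ) m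
        _ ≤ K * c ^ (n * e * m) := h𝒬
        _ ≤ K ^ n * c ^ (n * e * m) := Nat.mul_le_mul_right _ (Nat.le_self_pow hn.ne' K)
        _ = (K * c ^ (e * m)) ^ n := by
            rw [mul_pow, ← pow_mul]; congr 2; ring
    have h3 : c ^ m ≤ c ^ (k (some i) Q * (n * (e + 1))) * K := by
      refine Nat.le_of_mul_le_mul_right ?_ (pow_pos hc0 (e * m))
      calc c ^ m * c ^ (e * m) = c ^ ((e + 1) * m) := by rw [← pow_add]; congr 1; ring
        _ ≤ c ^ ((e + 1) * (n * k (some i) Q + k none Q)) :=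
            Nat.pow_le_pow_right hc0 (Nat.mul_le_mul_left _ h1)
        _ = c ^ (k (some i) Q * (n * (e + 1))) * c ^ ((e + 1) * k none Q) := by
            rw [← pow_add]; congr 1; ring
        _ ≤ c ^ (k (some i) Q * (n * (e + 1))) * (K * c ^ (e * m)) := Nat.mul_le_mul_left _ h2
        _ = _ := by ring
    have hp : n * (e + 1) ≠ 0 := by positivity
    refine (Nat.pow_le_pow_iff_left hp).1 ?_
    calc (2 ^ ((n + 2) * m)) ^ (n * (e + 1)) = c ^ m := by
          rw [hc, gain, ← pow_mul, ← pow_mul]; congr 1; ring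
      _ ≤ c ^ (k (some i) Q * (n * (e + 1))) * K := h3
      _ ≤ c ^ (k (some i) Q * (n * (e + 1))) * K ^ (n * (e + 1)) :=
          Nat.mul_le_mul_left _ (Nat.le_self_pow hp K)
      _ = (K * c ^ k (some i) Q) ^ (n * (e + 1)) := by rw [mul_pow, ← pow_mul, mul_comm]
  have hfilter : ({Q ∈ S | ancestor b m Q = ancestor b m Q₀} : Finset _) = S :=
    Finset.filter_true_of_mem fun Q hQ => hroot Q hQ Q₀ hQ₀
  have htotal := sum_colour_weight_le (c := c) (by rw [hbct]; positivity) hbct lab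
    (fun j v y U hU => hlab j i v y U hU) S m hS m le_rfl (ancestor b m Q₀)
  rw [hfilter] at htotal
  refine Nat.le_of_mul_le_mul_right ?_ (pow_pos (show 0 < 2 by norm_num) ((n + 1) * m))
  calc #S * 2 ^ m * 2 ^ ((n + 1) * m) = #S • 2 ^ ((n + 2) * m) := by
        rw [smul_eq_mul, mul_assoc, ← pow_add]; congr 2; ring
    _ ≤ ∑ Q ∈ S, K * c ^ k (some i) Q := Finset.card_nsmul_le_sum _ _ _ hweight
    _ = K * ∑ Q ∈ S, c ^ k (some i) Q := by rw [Finset.mul_sum]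
    _ ≤ K * (2 ^ (n + 1) * b) ^ m := Nat.mul_le_mul_left _ htotal
    _ = K * b ^ m * 2 ^ ((n + 1) * m) := by rw [mul_pow, ← pow_mul]; ring

/-- A set of vanishing `s`-dimensional Hausdorff measure is covered by balls with small total
`s`-dimensional content. -/
lemma exists_balls_of_hausdorffMeasure_eq_zero {Y : Type*} [MetricSpace Y] [MeasurableSpace Y]
    [BorelSpace Y] [Nonempty Y] {s : ℝ} (hs : 0 < s) {N : Set Y} (hN : μH[s] N = 0)
    {ε : ℝ≥0∞} (hε : ε ≠ 0) : ∃ (z : ℕ → Y) (r : ℕ → ℝ), (∀ k, 0 < r k) ∧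
      ∑' k, ENNReal.ofReal (r k) ^ s ≤ ε ∧ ∀ x ∈ N, ∃ k, dist x (z k) ≤ r k := by
  classical
  rw [Measure.hausdorffMeasure_apply] at hN
  have h1 : (⨅ (t : ℕ → Set Y) (_ : N ⊆ ⋃ n, t n) (_ : ∀ n, ediam (t n) ≤ 1),
      ∑' n, ⨆ _ : (t n).Nonempty, ediam (t n) ^ s) < ε / 2 := by
    refine lt_of_le_of_lt ?_ (ENNReal.half_pos hε)
    rw [← hN]
    exact le_iSup₂_of_le (1 : ℝ≥0∞) one_pos le_rfl
  simp only [iInf_lt_iff] at h1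
  obtain ⟨t, hcov, hdiam, hsum⟩ := h1
  obtain ⟨η, hη, hηsum⟩ := ENNReal.exists_pos_sum_of_countable (ENNReal.half_pos hε).ne' ℕ
  let d : ℕ → ℝ≥0∞ := fun k => ⨆ _ : (t k).Nonempty, ediam (t k) ^ s
  have hd : ∀ k, d k ≤ 1 := fun k => iSup_le fun _ => ENNReal.rpow_le_one (hdiam k) hs.le
  have hfin : ∀ k, (d k + η k) ^ (1 / s) ≠ ⊤ := fun k =>
    ENNReal.rpow_ne_top_of_nonneg (by positivity)
      (ENNReal.add_ne_top.2 ⟨ne_top_of_le_ne_top ENNReal.one_ne_top (hd k), ENNReal.coe_ne_top⟩)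
  have hpos : ∀ k, (d k + η k) ^ (1 / s) ≠ 0 := fun k => by
    have := (hη k).ne'
    simp [ENNReal.rpow_eq_zero_iff, this, hs.not_gt]
  refine ⟨fun k => if h : (t k).Nonempty then h.some else Classical.arbitrary Y,
    fun k => ((d k + η k) ^ (1 / s)).toReal,
    fun k => ENNReal.toReal_pos (hpos k) (hfin k), ?_, fun x hx => ?_⟩
  · have : ∀ k, ENNReal.ofReal ((d k + η k) ^ (1 / s)).toReal ^ s = d k + η k := by
      intro k
      rw [ENNReal.ofReal_toReal (hfin k), ← ENNReal.rpow_mul, one_div, inv_mul_cancel₀ hs.ne',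
        ENNReal.rpow_one]
    simp_rw [this]
    rw [ENNReal.tsum_add, ← ENNReal.add_halves ε]
    exact add_le_add hsum.le hηsum.le
  · obtain ⟨k, hk⟩ := mem_iUnion.1 (hcov hx)
    refine ⟨k, ?_⟩
    have hne : (t k).Nonempty := ⟨x, hk⟩
    simp only [dif_pos hne]
    rw [dist_edist]
    refine ENNReal.toReal_mono (hfin k) ((edist_le_ediam_of_mem hk hne.some_mem).trans ?_)
    have h2 : ediam (t k) ^ s ≤ d k := le_iSup (fun _ : (t k).Nonempty => ediam (t k) ^ s) hne
    calc ediam (t k) = (ediam (t k) ^ s) ^ (1 / s) := by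
          rw [← ENNReal.rpow_mul, mul_one_div_cancel hs.ne', ENNReal.rpow_one]
      _ ≤ _ := ENNReal.rpow_le_rpow (h2.trans le_self_add) (by positivity)

/-- The index of the grid cube of side `b⁻ᵐ` that contains the point `y`. -/
def gridIndex {n : ℕ} (b m : ℕ) (y : Fin n → ℝ) : Fin n → ℤ := fun l => ⌊(b : ℝ) ^ m * y l⌋

lemma abs_floor_sub_floor_le_one {x y : ℝ} (h : |x - y| ≤ 1) : |⌊x⌋ - ⌊y⌋| ≤ 1 := by
  obtain ⟨h1, h2⟩ := abs_le.1 h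
  rw [abs_le]
  constructor
  · have : ⌊y⌋ ≤ ⌊x + 1⌋ := Int.floor_le_floor (by linarith)
    rw [Int.floor_add_one] at this
    omega
  · have : ⌊x⌋ ≤ ⌊y + 1⌋ := Int.floor_le_floor (by linarith)
    rw [Int.floor_add_one] at this
    omega

open scoped Finset in
/-- A set of dimension less than `n` lies in the upper limit of families of grid cubes whose
cardinality is controlled by its dimension. -/
lemma exists_grid_cover {n e : ℕ} [NeZero n] (he : 1 ≤ e) {N : Set (Fin n → ℝ)}
    (hN : μH[(n * e : ℝ) / (e + 2)] N = 0) : ∃ (K : ℕ) (𝒬 : ℕ → Finset (Fin n → ℤ)),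
      (∀ m, #(𝒬 m) ≤ K * gain n e ^ (n * e * m)) ∧
      ∀ y ∈ N, ∃ᶠ m in atTop, gridIndex (gridBase n e) m y ∈ 𝒬 m := by
  classical
  have hn : 0 < n := Nat.pos_of_ne_zero (NeZero.ne n)
  set s : ℝ := (n * e : ℝ) / (e + 2) with hs_def
  have hs : 0 < s := by positivity
  set c := gain n e with hc
  have hc0 : 0 < c := gain_pos n e
  set b := gridBase n e with hb
  have hb2 : 2 ≤ b := two_le_gridBase n e
  have hb0 : (0 : ℝ) < b := by positivity
  set β : ℝ := (b : ℝ)⁻¹ with hβ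
  have hβ0 : 0 < β := by positivity
  have hβ1 : β < 1 := inv_lt_one_of_one_lt₀ (by exact_mod_cast hb2)
  have hβs : ∀ m : ℕ, (β ^ m) ^ s = ((c : ℝ) ^ (n * e * m))⁻¹ := by
    intro m
    have : (b : ℝ) = (c : ℝ) ^ (e + 2) := by rw [hb, gridBase]; push_cast; rfl
    rw [hβ, inv_pow, Real.inv_rpow (by positivity), this, ← pow_mul, ← Real.rpow_natCast,
      ← Real.rpow_mul (by positivity), ← Real.rpow_natCast]
    congr 2
    rw [hs_def]
    push_cast
    field_simp
  choose z r hr hsum hcov using fun j : ℕ =>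
    exists_balls_of_hausdorffMeasure_eq_zero hs hN (ε := 2⁻¹ ^ (j + 1))
      (pow_ne_zero _ (by simp))
  have hsum' : ∑' p : ℕ × ℕ, ENNReal.ofReal (r p.1 p.2) ^ s ≤ 1 := by
    rw [ENNReal.tsum_prod (f := fun j k => ENNReal.ofReal (r j k) ^ s)]
    exact (ENNReal.tsum_le_tsum hsum).trans
      (by simp [ENNReal.tsum_geometric_add_one, ENNReal.inv_mul_cancel])
  have hI : ∀ m : ℕ, ∃ I : Finset (ℕ × ℕ), #I ≤ c ^ (n * e * (m + 1)) ∧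
      ∀ p : ℕ × ℕ, β ^ (m + 1) ≤ r p.1 p.2 → p ∈ I := by
    intro m
    have hβm : ENNReal.ofReal ((β ^ (m + 1)) ^ s) = ((c ^ (n * e * (m + 1)) : ℕ) : ℝ≥0∞)⁻¹ := by
      rw [hβs, ENNReal.ofReal_inv_of_pos (by positivity), ← Nat.cast_pow, ENNReal.ofReal_natCast]
    obtain ⟨hf, hcard⟩ := ENNReal.finset_card_const_le_le_of_tsum_le ENNReal.one_ne_top hsum'
      (ε := ((c ^ (n * e * (m + 1)) : ℕ) : ℝ≥0∞)⁻¹) (by simp)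
    refine ⟨hf.toFinset, ?_, fun p hp => ?_⟩
    · rw [one_div, inv_inv] at hcard
      exact_mod_cast hcard
    · rw [Finite.mem_toFinset, mem_ofPred_eq, ← hβm, ENNReal.ofReal_rpow_of_pos (hr _ _)]
      exact ENNReal.ofReal_le_ofReal (Real.rpow_le_rpow (by positivity) hp hs.le)
  choose I hIcard hImem using hI
  let D : Finset (Fin n → ℤ) := Fintype.piFinset fun _ => Finset.Icc (-1) 1
  have hD : #D = 3 ^ n := by simp [D]
  refine ⟨3 ^ n * c ^ (n * e), fun m => (I m ×ˢ D).image
    fun p => gridIndex b m (z p.1.1 p.1.2) + p.2, fun m => ?_, fun y hy => ?_⟩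
  · calc _ ≤ #(I m ×ˢ D) := Finset.card_image_le
      _ = #(I m) * 3 ^ n := by rw [Finset.card_product, hD]
      _ ≤ c ^ (n * e * (m + 1)) * 3 ^ n := Nat.mul_le_mul_right _ (hIcard m)
      _ = _ := by ring
  · rw [frequently_atTop]
    intro M
    obtain ⟨j, hj⟩ := exists_pow_lt_of_lt_one (show 0 < (β ^ M) ^ s by positivity)
      (show (2⁻¹ : ℝ) < 1 by norm_num)
    obtain ⟨k, hk⟩ := hcov j y hy
    have hrM : r j k < β ^ M := by
      have h1 : ENNReal.ofReal (r j k) ^ s ≤ 2⁻¹ ^ (j + 1) := (ENNReal.le_tsum k).trans (hsum j)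
      rw [ENNReal.ofReal_rpow_of_pos (hr _ _)] at h1
      have h2 : r j k ^ s ≤ 2⁻¹ ^ (j + 1) := by
        have := ENNReal.toReal_mono (by finiteness) h1
        rw [ENNReal.toReal_ofReal (by have := hr j k; positivity)] at this
        simpa using this
      have h3 : (2⁻¹ : ℝ) ^ (j + 1) ≤ 2⁻¹ ^ j :=
        pow_le_pow_of_le_one (by norm_num) (by norm_num) (by omega)
      exact (Real.rpow_lt_rpow_iff (hr j k).le (by positivity) hs).1 (by linarith)
    obtain ⟨m, hm1, hm2⟩ := exists_nat_pow_near_of_lt_one (hr j k)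
      (hrM.le.trans (pow_le_one₀ hβ0.le hβ1.le)) hβ0 hβ1
    refine ⟨m, ?_, ?_⟩
    · have := (pow_lt_pow_iff_right_of_lt_one₀ hβ0 hβ1).1 (hm1.trans hrM)
      omega
    · refine Finset.mem_image.2 ⟨((j, k), gridIndex b m y - gridIndex b m (z j k)), ?_, ?_⟩
      · refine Finset.mem_product.2 ⟨hImem m (j, k) hm1.le, Fintype.mem_piFinset.2 fun l => ?_⟩
        rw [Finset.mem_Icc, ← abs_le]
        refine abs_floor_sub_floor_le_one ?_
        rw [← mul_sub, abs_mul, abs_of_pos (by positivity)]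
        calc (b : ℝ) ^ m * |y l - z j k l| ≤ (b : ℝ) ^ m * β ^ m := by
              gcongr
              exact ((dist_le_pi_dist y (z j k) l).trans hk).trans hm2
          _ = 1 := by rw [hβ, ← mul_pow, mul_inv_cancel₀ hb0.ne', one_pow]
      · simp

lemma ancestor_gridIndex {n b : ℕ} (hb : 0 < b) (k j : ℕ) (y : Fin n → ℝ) :
    ancestor b j (gridIndex b (k + j) y) = gridIndex b k y := by
  funext l
  have hb0 : (0 : ℝ) < b := by exact_mod_cast hb
  simp only [ancestor, gridIndex]
  have := Int.floor_div_natCast ((b : ℝ) ^ (k + j) * y l) (b ^ j)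
  push_cast at this
  rw [← this]
  congr 1
  field_simp
  ring

/-- The set `A` is negligible along every curve whose `ψ`-image has uniformly positive speed in
the `i`-th coordinate and small slope, at most `κ`, in all the others. -/
def AxisNull {X : Type*} {n : ℕ} (κ : ℝ) (ψ : X → Fin n → ℝ) (i : Fin n) (A : Set X) : Prop :=
  ∀ (γ : ℝ → X) (s : Set ℝ) (δ : ℝ), 0 < δ →
    (∀ t ∈ s, ∀ u ∈ s, δ * |t - u| ≤ |ψ (γ t) i - ψ (γ u) i| ∧ ∀ l, l ≠ i →
      |ψ (γ t) l - ψ (γ u) l| ≤ κ * |ψ (γ t) i - ψ (γ u) i|) →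
    volume (s ∩ γ ⁻¹' A) = 0

open scoped Finset in
/-- A space whose image under `ψ` has small dimension splits into pieces, the `i`-th of which is
negligible along curves that are steep in the `i`-th direction. -/
lemma exists_axisNull_decomposition {X : Type*} [MetricSpace X] [MeasurableSpace X]
    [BorelSpace X] {n e : ℕ} [NeZero n] (he : 1 ≤ e) {ψ : X → Fin n → ℝ} (hψ : Continuous ψ)
    (hN : μH[(n * e : ℝ) / (e + 2)] (range ψ) = 0) :
    ∃ A : Fin n → Set X, (∀ i, MeasurableSet (A i)) ∧ (⋃ i, A i) = univ ∧
      ∀ i, AxisNull (gridBase n e : ℝ)⁻¹ ψ i (A i) := by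
  classical
  obtain ⟨K, 𝒬, h𝒬, hcov⟩ := exists_grid_cover he hN
  choose ty hty using fun m => exists_cube_colouring (𝒬 m) m (h𝒬 m)
  set b := gridBase n e with hb
  have hb2 : 2 ≤ b := two_le_gridBase n e
  have hbpos : 0 < b := by omega
  have hb0 : (0 : ℝ) < b := by positivity
  let B : ℕ → Fin n → Set X := fun m i =>
    {x | gridIndex b m (ψ x) ∈ 𝒬 m ∧ ty m (gridIndex b m (ψ x)) = i}
  have hgm : ∀ m, Measurable fun x => gridIndex b m (ψ x) := fun m =>
    measurable_pi_lambda _ fun l => Int.measurable_floor.comp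
      (measurable_const.mul ((continuous_apply l).comp hψ).measurable)
  have hB : ∀ m i, MeasurableSet (B m i) := fun m i =>
    hgm m (Set.to_countable {Q | Q ∈ 𝒬 m ∧ ty m Q = i}).measurableSet
  refine ⟨fun i => {x | ∃ᶠ m in atTop, x ∈ B m i}, fun i => ?_, ?_, ?_⟩
  · have : {x | ∃ᶠ m in atTop, x ∈ B m i} = limsup (fun m => B m i) atTop := by
      ext x; simp [mem_limsup_iff_frequently_mem]
    simp only [this]
    exact MeasurableSet.measurableSet_limsup fun m => hB m i
  · refine eq_univ_of_forall fun x => mem_iUnion.2 ?_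
    by_contra! hcon
    have h1 : ∀ i, ∀ᶠ m in atTop, x ∉ B m i := fun i => not_frequently.1 (hcon i)
    refine hcov (ψ x) (mem_range_self x) ?_
    filter_upwards [eventually_all.2 h1] with m hm hx
    exact hm _ ⟨hx, rfl⟩
  intro i γ s δ hδ hs
  let p : ℝ → Fin n → ℝ := fun t => ψ (γ t)
  let F : (Fin n → ℤ) → ℕ → Set ℝ := fun z m =>
    {t | t ∈ s ∧ gridIndex b 0 (p t) = z ∧ γ t ∈ B m i}
  have hF : ∀ z m, volume (F z m) ≤ ENNReal.ofReal (K / δ * 2⁻¹ ^ m) := by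
    intro z m
    let S : Finset (Fin n → ℤ) := {Q ∈ 𝒬 m | ∃ t ∈ F z m, gridIndex b m (p t) = Q}
    have hScard : #S * 2 ^ m ≤ K * b ^ m := by
      refine hty m i S (Finset.filter_subset _ _) (fun Q hQ => ?_) (fun Q hQ Q' hQ' => ?_)
        (fun j hj Q hQ Q' hQ' hanc l hl => ?_)
      · obtain ⟨-, t, ht, rfl⟩ := Finset.mem_filter.1 hQ
        exact ht.2.2.2
      · obtain ⟨-, t, ht, rfl⟩ := Finset.mem_filter.1 hQ
        obtain ⟨-, u, hu, rfl⟩ := Finset.mem_filter.1 hQ'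
        have := fun y => ancestor_gridIndex hbpos 0 m (n := n) y
        rw [zero_add] at this
        rw [this, this, ht.2.1, hu.2.1]
      · obtain ⟨-, t, ht, rfl⟩ := Finset.mem_filter.1 hQ
        obtain ⟨-, u, hu, rfl⟩ := Finset.mem_filter.1 hQ'
        obtain ⟨k, rfl⟩ : ∃ k, m = k + (j + 1) := ⟨m - (j + 1), by omega⟩
        rw [ancestor_gridIndex hbpos, ancestor_gridIndex hbpos] at hanc
        rw [show k + (j + 1) = k + 1 + j by ring, ancestor_gridIndex hbpos,
          ancestor_gridIndex hbpos]
        refine abs_floor_sub_floor_le_one ?_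
        have h1 := Int.abs_sub_lt_one_of_floor_eq_floor (congrFun hanc i)
        rw [← mul_sub, abs_mul, abs_of_pos (by positivity)] at h1 ⊢
        calc (b : ℝ) ^ (k + 1) * |p t l - p u l|
            ≤ (b : ℝ) ^ (k + 1) * ((b : ℝ)⁻¹ * |p t i - p u i|) := by
              gcongr
              exact (hs t ht.1 u hu.1).2 l hl
          _ = (b : ℝ) ^ k * |p t i - p u i| := by
              field_simp
              ring
          _ ≤ 1 := h1.le
    have hpiece : ∀ Q, volume {t | t ∈ F z m ∧ gridIndex b m (p t) = Q} ≤
        ENNReal.ofReal (((b : ℝ) ^ m)⁻¹ / δ) := by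
      intro Q
      refine (Real.volume_le_diam _).trans (ediam_le fun t ht u hu => ?_)
      rw [edist_dist]
      refine ENNReal.ofReal_le_ofReal ?_
      rw [Real.dist_eq, le_div_iff₀ hδ, mul_comm]
      refine (hs t ht.1.1 u hu.1.1).1.trans ?_
      have h1 := Int.abs_sub_lt_one_of_floor_eq_floor (congrFun (ht.2.trans hu.2.symm) i)
      rw [← mul_sub, abs_mul, abs_of_pos (by positivity)] at h1
      rw [inv_eq_one_div, le_div_iff₀ (by positivity), mul_comm]
      exact h1.le
    have hsub : F z m ⊆ ⋃ Q ∈ S, {t | t ∈ F z m ∧ gridIndex b m (p t) = Q} := fun t ht =>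
      mem_biUnion (Finset.mem_coe.2 (Finset.mem_filter.2 ⟨ht.2.2.1, t, ht, rfl⟩)) ⟨ht, rfl⟩
    calc volume (F z m) ≤ ∑ Q ∈ S, volume {t | t ∈ F z m ∧ gridIndex b m (p t) = Q} :=
          (measure_mono hsub).trans (measure_biUnion_finset_le _ _)
      _ ≤ ∑ Q ∈ S, ENNReal.ofReal (((b : ℝ) ^ m)⁻¹ / δ) := Finset.sum_le_sum fun Q _ => hpiece Q
      _ = ENNReal.ofReal (#S * (((b : ℝ) ^ m)⁻¹ / δ)) := by
          rw [Finset.sum_const, nsmul_eq_mul, ENNReal.ofReal_mul (by positivity),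
            ENNReal.ofReal_natCast]
      _ ≤ _ := by
          refine ENNReal.ofReal_le_ofReal ?_
          have h2 : (#S : ℝ) * 2 ^ m ≤ K * b ^ m := by exact_mod_cast hScard
          rw [inv_pow]
          field_simp
          linarith
  have hlim : ∀ z, volume {t | ∃ᶠ m in atTop, t ∈ F z m} = 0 := by
    intro z
    refine measure_setOfPred_frequently_eq_zero
      (ne_top_of_le_ne_top ?_ (ENNReal.tsum_le_tsum (hF z)))
    refine Summable.tsum_ofReal_ne_top ?_
    exact (summable_geometric_of_lt_one (by norm_num) (by norm_num)).mul_left _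
  refine measure_mono_null (fun t ht => ?_) (measure_iUnion_null hlim)
  refine mem_iUnion.2 ⟨gridIndex b 0 (p t), ?_⟩
  exact Frequently.mono ht.2 fun m hm => ⟨ht.1, rfl, hm⟩

section LipAt

lemma lipQuotient_le {f : X → ℝ} {x : X} {ε r : ℝ} (hε : 0 ≤ ε) (hr : 0 < r)
    (h : ∀ y, dist y x ≤ r → |f y - f x| ≤ ε * dist y x) :
    ∀ q ∈ (fun y => |f y - f x| / r) '' closedBall x r, q ≤ ε := by
  rintro _ ⟨y, hy, rfl⟩
  rw [mem_closedBall] at hy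
  simp only
  rw [div_le_iff₀ hr]
  exact (h y hy).trans (mul_le_mul_of_nonneg_left hy hε)

lemma lipQuotient_nonneg (f : X → ℝ) (x : X) {r : ℝ} (hr : 0 < r) :
    0 ≤ sSup ((fun y => |f y - f x| / r) '' closedBall x r) := by
  refine Real.sSup_nonneg ?_
  rintro _ ⟨y, -, rfl⟩
  positivity

lemma isCoboundedUnder_lipQuotient (f : X → ℝ) (x : X) :
    (𝓝[>] (0 : ℝ)).IsCoboundedUnder (· ≤ ·)
      fun r => sSup ((fun y => |f y - f x| / r) '' closedBall x r) :=
  isCoboundedUnder_le_of_eventually_le _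
    (eventually_mem_nhdsWithin.mono fun _ hr => lipQuotient_nonneg f x hr)

lemma isBoundedUnder_lipQuotient {f : X → ℝ} {K : ℝ≥0} (hf : LipschitzWith K f) (x : X) :
    (𝓝[>] (0 : ℝ)).IsBoundedUnder (· ≤ ·)
      fun r => sSup ((fun y => |f y - f x| / r) '' closedBall x r) := by
  refine isBoundedUnder_of_eventually_le (a := (K : ℝ)) ?_
  filter_upwards [eventually_mem_nhdsWithin] with r hr
  exact Real.sSup_le (lipQuotient_le K.2 hr fun y _ => hf.dist_le_mul y x) K.2

lemma lipAt_nonneg {f : X → ℝ} {K : ℝ≥0} (hf : LipschitzWith K f) (x : X) : 0 ≤ lipAt f x :=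
  le_limsup_of_frequently_le
    (Eventually.frequently (f := 𝓝[>] (0 : ℝ))
      (eventually_mem_nhdsWithin.mono fun _ hr => lipQuotient_nonneg f x hr))
    (isBoundedUnder_lipQuotient hf x)

lemma lipAt_le_of_eventually {f : X → ℝ} {x : X} {ε : ℝ} (hε : 0 ≤ ε)
    (h : ∀ᶠ y in 𝓝 x, |f y - f x| ≤ ε * dist y x) : lipAt f x ≤ ε := by
  obtain ⟨δ, hδ, hball⟩ := Metric.eventually_nhds_iff.1 h
  refine limsup_le_of_le (isCoboundedUnder_lipQuotient f x) ?_
  filter_upwards [Ioo_mem_nhdsGT hδ] with r hr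
  exact Real.sSup_le (lipQuotient_le hε hr.1 fun y hy => hball (hy.trans_lt hr.2)) hε

lemma eventually_le_of_lipAt_lt {f : X → ℝ} {K : ℝ≥0} (hf : LipschitzWith K f) {x : X} {ε : ℝ}
    (h : lipAt f x < ε) : ∀ᶠ y in 𝓝 x, |f y - f x| ≤ ε * dist y x := by
  obtain ⟨δ, hδ, hlt⟩ := mem_nhdsGT_iff_exists_Ioo_subset.1
    (eventually_lt_of_limsup_lt h (isBoundedUnder_lipQuotient hf x))
  refine Metric.eventually_nhds_iff.2 ⟨δ, hδ, fun y hy => ?_⟩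
  rcases (dist_nonneg (x := y) (y := x)).eq_or_lt with h0 | h0
  · simp [dist_eq_zero.1 h0.symm]
  rw [← div_le_iff₀ h0]
  have hbdd : BddAbove ((fun z => |f z - f x| / dist y x) '' closedBall x (dist y x)) :=
    ⟨K, lipQuotient_le K.2 h0 fun z _ => hf.dist_le_mul z x⟩
  have hsup : sSup ((fun z => |f z - f x| / dist y x) '' closedBall x (dist y x)) < ε :=
    hlt ⟨h0, hy⟩
  exact (le_csSup hbdd ⟨y, mem_closedBall.2 le_rfl, rfl⟩).trans hsup.le

lemma lipAt_le_iff {f : X → ℝ} {K : ℝ≥0} (hf : LipschitzWith K f) {x : X} {a : ℝ} (ha : 0 ≤ a) :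
    lipAt f x ≤ a ↔ ∀ ε > a, ∀ᶠ y in 𝓝 x, |f y - f x| ≤ ε * dist y x :=
  ⟨fun h _ hε => eventually_le_of_lipAt_lt hf (h.trans_lt hε), fun h =>
    le_of_forall_gt_imp_ge_of_dense fun ε hε => lipAt_le_of_eventually (ha.trans hε.le) (h ε hε)⟩

lemma lipAt_le_zero_iff {f : X → ℝ} {K : ℝ≥0} (hf : LipschitzWith K f) {x : X} :
    lipAt f x ≤ 0 ↔ (fun y => f y - f x) =o[𝓝 x] fun y => dist y x := by
  rw [lipAt_le_iff hf le_rfl, Asymptotics.isLittleO_iff]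
  simp only [Real.norm_eq_abs, abs_of_nonneg dist_nonneg]

lemma lipAt_le_add {f g : X → ℝ} {K K' M : ℝ≥0} (hf : LipschitzWith K f) (hg : LipschitzWith K' g)
    (hfg : LipschitzWith M (f - g)) (x : X) : lipAt f x ≤ lipAt g x + M := by
  have hg0 := lipAt_nonneg hg x
  rw [lipAt_le_iff hf (by positivity)]
  intro ε hε
  filter_upwards [eventually_le_of_lipAt_lt hg (show lipAt g x < ε - M by linarith)] with y hy
  have h1 : |(f - g) y - (f - g) x| ≤ M * dist y x := hfg.dist_le_mul y x
  calc |f y - f x| = |(g y - g x) + ((f - g) y - (f - g) x)| := by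
        congr 1
        simp only [Pi.sub_apply]
        ring
    _ ≤ (ε - M) * dist y x + M * dist y x := (abs_add_le _ _).trans (add_le_add hy h1)
    _ = ε * dist y x := by ring

lemma measurable_lipAt [MeasurableSpace X] [BorelSpace X] {f : X → ℝ} {K : ℝ≥0}
    (hf : LipschitzWith K f) : Measurable (lipAt f) := by
  refine measurable_of_Iic fun a => ?_
  rcases lt_or_ge a 0 with ha | ha
  · convert MeasurableSet.empty
    refine eq_empty_of_forall_notMem fun x hx => ?_
    exact absurd (lipAt_nonneg hf x) (not_le.2 (lt_of_le_of_lt hx ha))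
  have hcl : ∀ ε δ : ℝ, IsClosed {x | ∀ y, dist y x < δ → |f y - f x| ≤ ε * dist y x} := by
    intro ε δ
    simp only [ofPred_forall, imp_iff_not_or, not_lt, ofPred_or]
    refine isClosed_iInter fun y => IsClosed.union ?_ ?_
    · exact isClosed_le continuous_const (continuous_const.dist continuous_id)
    · exact isClosed_le (continuous_const.sub hf.continuous).abs
        (continuous_const.mul (continuous_const.dist continuous_id))
  have : lipAt f ⁻¹' Iic a = ⋂ k : ℕ, ⋃ m : ℕ, {x | ∀ y, dist y x < 1 / ((m : ℝ) + 1) →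
      |f y - f x| ≤ (a + 1 / ((k : ℝ) + 1)) * dist y x} := by
    ext x
    simp only [mem_preimage, mem_Iic, lipAt_le_iff hf ha, mem_iInter, mem_iUnion, mem_ofPred_eq]
    constructor
    · intro h k
      obtain ⟨δ, hδ, hball⟩ := Metric.eventually_nhds_iff.1
        (h (a + 1 / ((k : ℝ) + 1)) (lt_add_of_pos_right _ Nat.one_div_pos_of_nat))
      obtain ⟨m, hm⟩ := exists_nat_one_div_lt hδ
      exact ⟨m, fun y hy => hball (hy.trans hm)⟩
    · intro h ε hε
      obtain ⟨k, hk⟩ := exists_nat_one_div_lt (sub_pos.2 hε)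
      obtain ⟨m, hm⟩ := h k
      refine Metric.eventually_nhds_iff.2 ⟨_, Nat.one_div_pos_of_nat (n := m), fun y hy => ?_⟩
      refine (hm y hy).trans ?_
      gcongr
      linarith
  rw [this]
  exact MeasurableSet.iInter fun k => MeasurableSet.iUnion fun m => (hcl _ _).measurableSet

lemma lipschitzWith_inner {n : ℕ} {φ : X → E n} {L : ℝ≥0} (hφ : LipschitzWith L φ) (w : E n) :
    LipschitzWith (L * ‖w‖₊) fun y => ⟪φ y, w⟫ := by
  refine LipschitzWith.of_dist_le_mul fun y z => ?_
  rw [Real.dist_eq, ← inner_sub_left]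
  refine (abs_real_inner_le_norm _ _).trans ?_
  rw [← dist_eq_norm, NNReal.coe_mul, coe_nnnorm, mul_right_comm]
  gcongr
  exact hφ.dist_le_mul y z

lemma continuous_lipAt_inner {n : ℕ} {φ : X → E n} {L : ℝ≥0} (hφ : LipschitzWith L φ) (x : X) :
    Continuous fun w : E n => lipAt (fun y => ⟪φ y, w⟫) x := by
  refine (LipschitzWith.of_le_add_mul L fun w w' => ?_).continuous
  refine (lipAt_le_add (lipschitzWith_inner hφ w) (lipschitzWith_inner hφ w')
    (M := L * ‖w - w'‖₊) ?_ x).trans_eq ?_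
  · convert lipschitzWith_inner hφ (w - w') using 1
    funext y
    simp [inner_sub_right]
  · rw [dist_eq_norm]; simp

lemma mem_indSet_iff {n : ℕ} {φ : X → E n} {L : ℝ≥0} (hφ : LipschitzWith L φ) {x : X} :
    x ∈ indSet φ ↔ ∃ k : ℕ, ∀ w : E n, ‖w‖ = 1 →
      1 / ((k : ℝ) + 1) ≤ lipAt (fun y => ⟪φ y, w⟫) x := by
  refine ⟨fun hx => ?_, fun ⟨k, hk⟩ w hw => Nat.one_div_pos_of_nat.trans_le (hk w hw)⟩
  rcases (sphere (0 : E n) 1).eq_empty_or_nonempty with h0 | h0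
  · exact ⟨0, fun w hw => absurd (mem_sphere_zero_iff_norm.2 hw) (h0 ▸ notMem_empty w)⟩
  obtain ⟨w₀, hw₀, hmin⟩ := (isCompact_sphere (0 : E n) 1).exists_isMinOn h0
    (continuous_lipAt_inner hφ x).continuousOn
  obtain ⟨k, hk⟩ := exists_nat_one_div_lt (hx w₀ (mem_sphere_zero_iff_norm.1 hw₀))
  exact ⟨k, fun w hw => hk.le.trans (hmin (mem_sphere_zero_iff_norm.2 hw))⟩

lemma measurableSet_indSet [MeasurableSpace X] [BorelSpace X] {n : ℕ} {φ : X → E n} {L : ℝ≥0}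
    (hφ : LipschitzWith L φ) : MeasurableSet (indSet φ) := by
  obtain ⟨D, hDc, hD⟩ := TopologicalSpace.exists_countable_dense (sphere (0 : E n) 1)
  have : indSet φ = ⋃ k : ℕ, ⋂ w ∈ D, {x | 1 / ((k : ℝ) + 1) ≤
      lipAt (fun y => ⟪φ y, (w : E n)⟫) x} := by
    ext x
    simp only [mem_indSet_iff hφ, mem_iUnion, mem_iInter, mem_ofPred_eq]
    refine exists_congr fun k => ⟨fun h w _ => h w (mem_sphere_zero_iff_norm.1 w.2),
      fun h w hw => ?_⟩
    refine hD.induction (P := fun w : sphere (0 : E n) 1 => 1 / ((k : ℝ) + 1) ≤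
      lipAt (fun y => ⟪φ y, (w : E n)⟫) x) h ?_ ⟨w, mem_sphere_zero_iff_norm.2 hw⟩
    exact isClosed_le continuous_const
      ((continuous_lipAt_inner hφ x).comp continuous_subtype_val)
  rw [this]
  exact MeasurableSet.iUnion fun k => MeasurableSet.biInter hDc fun w _ =>
    measurableSet_le measurable_const (measurable_lipAt (lipschitzWith_inner hφ _))

end LipAt

/-- The open double cone around the `i`-th coordinate axis. -/
def axisCone {n : ℕ} (κ : ℝ) (i : Fin n) : Set (Fin n → ℝ) :=
  {y | 0 < |y i| ∧ ∀ l, l ≠ i → |y l| < κ * |y i|}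

lemma isOpen_axisCone {n : ℕ} (κ : ℝ) (i : Fin n) : IsOpen (axisCone κ i) := by
  have : axisCone κ i = {y | 0 < |y i|} ∩ ⋂ l, {y | l ≠ i → |y l| < κ * |y i|} := by
    ext y; simp [axisCone]
  rw [this]
  refine (isOpen_lt continuous_const (continuous_apply i).abs).inter
    (isOpen_iInter_of_finite fun l => ?_)
  by_cases hl : l = i
  · simp [hl]
  · simpa [hl] using isOpen_lt (continuous_apply l).abs
      (continuous_const.mul (continuous_apply i).abs)

lemma smul_mem_axisCone {n : ℕ} {κ : ℝ} {i : Fin n} {y : Fin n → ℝ} {c : ℝ} (hc : c ≠ 0) :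
    c • y ∈ axisCone κ i ↔ y ∈ axisCone κ i := by
  have hc_pos : 0 < |c| := abs_pos.2 hc
  simp only [axisCone, mem_ofPred_eq, Pi.smul_apply, smul_eq_mul, abs_mul, mul_left_comm κ,
    mul_lt_mul_iff_right₀ hc_pos, mul_pos_iff_of_pos_left hc_pos]

/-- The velocity of a curve avoids the axis cone almost everywhere in an axis-null set. -/
lemma AxisNull.ae_notMem_axisCone {Y : Type*} {n : ℕ} {κ : ℝ} {ψ : Y → Fin n → ℝ} {i : Fin n}
    {A : Set Y} (hA : AxisNull κ ψ i A) (γ : ℝ → Y) :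
    ∀ᵐ t ∂volume.restrict (Icc (0 : ℝ) 1), γ t ∈ A → ∀ v,
      HasDerivWithinAt (ψ ∘ γ) v (Icc 0 1) t → v ∉ axisCone κ i := by
  rw [ae_restrict_iff' measurableSet_Icc]
  let Z : ℕ → ℤ → Set ℝ := fun k q => {t | t ∈ Icc (0 : ℝ) 1 ∧ ⌊((k : ℝ) + 1) * t⌋ = q ∧
    ∀ u ∈ Icc (0 : ℝ) 1, |t - u| < 1 / ((k : ℝ) + 1) →
      1 / ((k : ℝ) + 1) * |t - u| ≤ |ψ (γ t) i - ψ (γ u) i| ∧ ∀ l, l ≠ i →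
        |ψ (γ t) l - ψ (γ u) l| ≤ κ * |ψ (γ t) i - ψ (γ u) i|}
  have hZ : ∀ k q, volume (Z k q ∩ γ ⁻¹' A) = 0 := by
    intro k q
    refine hA γ (Z k q) (1 / ((k : ℝ) + 1)) Nat.one_div_pos_of_nat fun t ht u hu => ?_
    refine ht.2.2 u hu.1 ?_
    have := Int.abs_sub_lt_one_of_floor_eq_floor (ht.2.1.trans hu.2.1.symm)
    rw [← mul_sub, abs_mul, abs_of_pos (by positivity)] at this
    rwa [lt_div_iff₀ (by positivity), mul_comm]
  refine measure_mono_null (fun t ht => ?_)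
    (measure_iUnion_null fun k => measure_iUnion_null fun q => hZ k q)
  simp only [mem_compl_iff, mem_ofPred_eq] at ht
  push Not at ht
  obtain ⟨htI, htA, v, hv, hvc⟩ := ht
  rw [hasDerivWithinAt_iff_tendsto_slope] at hv
  have h1 : ∀ᶠ y in 𝓝 v, y ∈ axisCone κ i ∧ |v i| / 2 < |y i| :=
    ((isOpen_axisCone κ i).eventually_mem hvc).and
      ((continuous_apply i).abs.continuousAt.eventually_const_lt (half_lt_self hvc.1))
  have h2 := hv.eventually h1
  rw [eventually_nhdsWithin_iff, Metric.eventually_nhds_iff] at h2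
  obtain ⟨δ, hδ, h2⟩ := h2
  obtain ⟨k, hk⟩ := exists_nat_one_div_lt (lt_min hδ (half_pos hvc.1))
  obtain ⟨hk1, hk2⟩ := lt_min_iff.1 hk
  simp only [mem_iUnion]
  refine ⟨k, ⌊((k : ℝ) + 1) * t⌋, ⟨htI, rfl, fun u hu htu => ?_⟩, htA⟩
  rcases eq_or_ne u t with rfl | hne
  · simp
  obtain ⟨hcone, hspeed⟩ := h2 (y := u) (by rw [dist_comm, Real.dist_eq]; exact htu.trans hk1)
    ⟨hu, hne⟩
  have hpos : 0 < |t - u| := abs_pos.2 (sub_ne_zero.2 hne.symm)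
  have hslope : ∀ l, |ψ (γ t) l - ψ (γ u) l| = |t - u| * |slope (ψ ∘ γ) t u l| := by
    intro l
    simp only [slope, vsub_eq_sub, Pi.smul_apply, smul_eq_mul, abs_mul, abs_inv,
      Function.comp_apply, Pi.sub_apply]
    rw [abs_sub_comm t u, mul_inv_cancel_left₀ (by rw [abs_sub_comm]; exact hpos.ne'),
      abs_sub_comm]
  simp only [hslope]
  constructor
  · rw [mul_comm]
    gcongr
    exact (hk2.trans hspeed).le
  · intro l hl
    rw [mul_left_comm]
    gcongr
    exact (hcone.2 l hl).le

/-- Functions with controlled derivative along curves through `P` have a small upper gradient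
on `P`. -/
lemma isUpperGradient_of_curves [MeasurableSpace X] [BorelSpace X] {n : ℕ} {φ : X → E n}
    {L : ℝ≥0} (hφ : LipschitzWith L φ) {P : Set X} (hP : MeasurableSet P) {w : E n}
    (hw : ‖w‖ = 1) {θ : ℝ} (hθ : 0 ≤ θ)
    (h : ∀ γ : ℝ → X, ∀ᵐ t ∂volume.restrict (Icc (0 : ℝ) 1), γ t ∈ P → ∀ v,
      HasDerivWithinAt (φ ∘ γ) v (Icc 0 1) t → |⟪v, w⟫| ≤ θ * ‖v‖) :
    IsUpperGradient (fun x => ⟪φ x, w⟫)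
      (P.indicator (fun _ => θ * L) + Pᶜ.indicator fun _ => (L : ℝ)) := by
  classical
  intro γ hγ
  set ρ : X → ℝ := P.indicator (fun _ => θ * L) + Pᶜ.indicator fun _ => (L : ℝ) with hρ
  have hρm : Measurable ρ :=
    (measurable_const.indicator hP).add (measurable_const.indicator hP.compl)
  have hφγ : LipschitzOnWith L (φ ∘ γ) (Icc 0 1) := by
    simpa using hφ.lipschitzOnWith.comp hγ (mapsTo_univ _ _)
  set g : ℝ → ℝ := fun t => ⟪φ (γ t), w⟫ with hg
  have hgL : LipschitzOnWith (L * ‖w‖₊ * 1) g (uIcc 0 1) := by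
    rw [uIcc_of_le zero_le_one]
    exact (lipschitzWith_inner hφ w).lipschitzOnWith.comp hγ (mapsTo_univ _ _)
  have hac := hgL.absolutelyContinuousOnInterval
  have hderiv_int := hac.integral_deriv_eq_sub
  have hderiv : ∀ᵐ t ∂volume.restrict (Icc (0 : ℝ) 1), ‖deriv g t‖ ≤ ρ (γ t) := by
    have hIoo : ∀ᵐ t ∂volume.restrict (Icc (0 : ℝ) 1), t ∈ Ioo (0 : ℝ) 1 := by
      rw [← restrict_Ioo_eq_restrict_Icc]
      exact ae_restrict_mem measurableSet_Ioo
    filter_upwards [hIoo, hφγ.ae_differentiableWithinAt_real measurableSet_Icc, h γ]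
      with t ht hdiff hcone
    have hnhds : Icc (0 : ℝ) 1 ∈ 𝓝 t := Icc_mem_nhds ht.1 ht.2
    have hv := hdiff.hasDerivWithinAt
    set v := derivWithin (φ ∘ γ) (Icc 0 1) t
    have hvL : ‖v‖ ≤ L := (hv.hasDerivAt hnhds).le_of_lipschitzOn hnhds hφγ
    have hgv : HasDerivAt g ⟪v, w⟫ t := by
      have := (hv.hasDerivAt hnhds).inner ℝ (hasDerivAt_const t w)
      simpa using this
    rw [hgv.deriv, Real.norm_eq_abs]
    by_cases htP : γ t ∈ P
    · simp only [hρ, Pi.add_apply, indicator_of_mem htP, mem_compl_iff, htP, not_true_eq_false,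
        not_false_eq_true, indicator_of_notMem, add_zero]
      exact (hcone htP v hv).trans (mul_le_mul_of_nonneg_left hvL hθ)
    · simp only [hρ, Pi.add_apply, mem_compl_iff, htP, not_false_eq_true, indicator_of_notMem,
        indicator_of_mem, zero_add]
      exact (abs_real_inner_le_norm v w).trans (by rwa [hw, mul_one])
  have hρint : Integrable (fun t => ρ (γ t)) (volume.restrict (Icc (0 : ℝ) 1)) := by
    refine Integrable.of_bound (C := θ * L + L) ?_ (Eventually.of_forall fun t => ?_)
    · exact (hρm.comp_aemeasurable
        (hγ.continuousOn.aemeasurable measurableSet_Icc)).aestronglyMeasurable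
    · have hθL : 0 ≤ θ * L := by positivity
      by_cases htP : γ t ∈ P <;> simp [hρ, htP, abs_of_nonneg hθ, hθL]
  calc |g 1 - g 0| = ‖∫ t in Icc (0 : ℝ) 1, deriv g t‖ := by
        rw [← hderiv_int, intervalIntegral.integral_of_le zero_le_one, integral_Icc_eq_integral_Ioc,
          Real.norm_eq_abs]
    _ ≤ ∫ t in Icc (0 : ℝ) 1, ρ (γ t) := norm_integral_le_of_norm_le hρint hderiv

/-- A Lipschitz image in `ℝⁿ` of a space of dimension less than `n` has vanishing Hausdorff
measure in a dimension below `n` that does not depend on the map. -/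
lemma exists_hausdorffMeasure_range_eq_zero {n : ℕ} (hdim : dimH (univ : Set X) < n) :
    ∃ e : ℕ, 1 ≤ e ∧ ∀ (ψ : X → Fin n → ℝ) (K : ℝ≥0), LipschitzWith K ψ →
      μH[(n * e : ℝ) / (e + 2)] (range ψ) = 0 := by
  obtain ⟨d, hd, hdn⟩ := ENNReal.lt_iff_exists_nnreal_btwn.1 hdim
  have hdn' : (d : ℝ) < n := by exact_mod_cast hdn
  obtain ⟨e, he⟩ := exists_nat_ge (2 * d / (n - d) : ℝ)
  refine ⟨e + 1, by omega, fun ψ K hψ => ?_⟩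
  have hlt : dimH (range ψ) < ((((n * (e + 1 : ℕ)) / ((e + 1 : ℕ) + 2) : ℝ≥0)) : ℝ≥0∞) := by
    refine (hψ.dimH_range_le.trans_lt hd).trans_le (ENNReal.coe_le_coe.2 ?_)
    rw [← NNReal.coe_le_coe]
    push_cast
    rw [le_div_iff₀ (by positivity)]
    rw [div_le_iff₀ (by linarith)] at he
    nlinarith
  have := hausdorffMeasure_of_dimH_lt hlt
  push_cast at this ⊢
  exact this

/-- If no basis of vectors avoids an open set `O`, then `O` contains the complement of a
hyperplane. -/
lemma exists_unit_forall_mem {n : ℕ} {O : Set (E n)}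
    (hO : ∀ v : Fin n → E n, LinearIndependent ℝ v → ∃ i, v i ∈ O) :
    ∃ w : E n, ‖w‖ = 1 ∧ ∀ v, ⟪v, w⟫ ≠ 0 → v ∈ O := by
  have hspan : Submodule.span ℝ Oᶜ ≠ ⊤ := by
    intro htop
    obtain ⟨b, hbO, hspan, hli⟩ := exists_linearIndependent ℝ Oᶜ
    rw [htop] at hspan
    let B := Module.Basis.mk hli (by rw [Subtype.range_coe, hspan])
    have hfin : Fintype b := FiniteDimensional.fintypeBasisIndex B
    have hcard : Fintype.card b = n := by
      rw [← Module.finrank_eq_card_basis B, finrank_euclideanSpace_fin]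
    let f : Fin n ≃ b := (Fintype.equivFinOfCardEq hcard).symm
    obtain ⟨i, hi⟩ := hO (fun i => (f i : E n)) (hli.comp f f.injective)
    exact hbO (f i).2 hi
  have hperp : (Submodule.span ℝ Oᶜ)ᗮ ≠ ⊥ := fun h =>
    hspan (Submodule.orthogonal_eq_bot_iff.1 h)
  obtain ⟨w, hw, hw0⟩ := Submodule.exists_mem_ne_zero_of_ne_bot hperp
  refine ⟨‖w‖⁻¹ • w, norm_smul_inv_norm hw0, fun v hv => ?_⟩
  by_contra hvO
  refine hv ?_
  rw [inner_smul_right, Submodule.inner_right_of_mem_orthogonal (Submodule.subset_span hvO) hw,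
    mul_zero]

/-- Under a pointwise upper gradient bound, maps into `ℝⁿ` are nowhere independent on a space of
dimension less than `n`. -/
lemma measure_indSet_eq_zero [MeasurableSpace X] [BorelSpace X] {μ : Measure X} {C : ℝ}
    (hC : 0 ≤ C) (h : ∀ f : X → ℝ, (∃ K, LipschitzWith K f) → ∀ ρ : X → ℝ, Measurable ρ →
      IsUpperGradient f ρ → ∀ᵐ x ∂μ, lipAt f x ≤ C * ρ x)
    {n : ℕ} (hdim : dimH (univ : Set X) < n) {φ : X → E n} {L : ℝ≥0} (hφ : LipschitzWith L φ) :
    μ (indSet φ) = 0 := by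
  classical
  have : NeZero n := ⟨by rintro rfl; simp at hdim⟩
  obtain ⟨e, he, hnull⟩ := exists_hausdorffMeasure_range_eq_zero hdim
  set κ : ℝ := (gridBase n e : ℝ)⁻¹ with hκ
  have hκ0 : 0 < κ := by
    have := two_le_gridBase n e
    positivity
  let T : ℕ → E n →L[ℝ] (Fin n → ℝ) := TopologicalSpace.denseSeq _
  have hTφ : ∀ j, LipschitzWith (‖T j‖₊ * L) (T j ∘ φ) := fun j => (T j).lipschitz.comp hφ
  choose A hAm hAU hA using fun j =>
    exists_axisNull_decomposition he (hTφ j).continuous (hnull _ _ (hTφ j))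
  let P : Finset (ℕ × Fin n) → Set X := fun F => ⋂ p ∈ F, A p.1 p.2
  have hP : ∀ F, MeasurableSet (P F) := fun F => Finset.measurableSet_biInter F fun p _ => hAm _ _
  let good : Finset (ℕ × Fin n) → ℝ → E n → Prop := fun F θ w => ‖w‖ = 1 ∧
    ∀ v, ‖v‖ = 1 → θ ≤ |⟪v, w⟫| → ∃ p ∈ F, T p.1 v ∈ axisCone κ p.2
  have hcurve : ∀ F θ w, 0 ≤ θ → good F θ w →
      ∀ γ : ℝ → X, ∀ᵐ t ∂volume.restrict (Icc (0 : ℝ) 1), γ t ∈ P F → ∀ v,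
        HasDerivWithinAt (φ ∘ γ) v (Icc 0 1) t → |⟪v, w⟫| ≤ θ * ‖v‖ := by
    intro F θ w hθ hw γ
    have hae := (ae_ball_iff F.countable_toSet).2 fun p _ =>
      (hA p.1 p.2).ae_notMem_axisCone γ
    filter_upwards [hae] with t ht htP v hv
    by_contra! hcon
    have hv0 : v ≠ 0 := by rintro rfl; simp at hcon
    have hvpos : 0 < ‖v‖ := norm_pos_iff.2 hv0
    obtain ⟨p, hpF, hp⟩ := hw.2 (‖v‖⁻¹ • v) (norm_smul_inv_norm hv0) (by
      rw [real_inner_smul_left, abs_mul, abs_inv, abs_norm, inv_mul_eq_div, le_div_iff₀ hvpos]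
      exact hcon.le)
    rw [map_smul, smul_mem_axisCone (inv_ne_zero hvpos.ne')] at hp
    refine ht p hpF (mem_iInter₂.1 htP p hpF) (T p.1 v) ?_ hp
    exact (T p.1).hasFDerivAt.comp_hasDerivWithinAt t hv
  have hlip : ∀ F, ∀ k : ℕ, ∀ᵐ x ∂μ, x ∈ P F → (∃ w, good F (1 / ((k : ℝ) + 1)) w) →
      ∃ w : E n, ‖w‖ = 1 ∧ lipAt (fun y => ⟪φ y, w⟫) x ≤ C * (1 / ((k : ℝ) + 1) * L) := by
    intro F k
    by_cases hex : ∃ w, good F (1 / ((k : ℝ) + 1)) w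
    · obtain ⟨w, hw⟩ := hex
      have hθ : (0 : ℝ) ≤ 1 / ((k : ℝ) + 1) := by positivity
      filter_upwards [h _ ⟨_, lipschitzWith_inner hφ w⟩ _
        ((measurable_const.indicator (hP F)).add (measurable_const.indicator (hP F).compl))
        (isUpperGradient_of_curves hφ (hP F) hw.1 hθ (hcurve F _ w hθ hw))] with x hx hxP _
      refine ⟨w, hw.1, hx.trans_eq ?_⟩
      simp [hxP]
    · exact Eventually.of_forall fun x _ hx => absurd hx hex
  have hall := ae_all_iff.2 fun F => ae_all_iff.2 (hlip F)
  refine measure_mono_null (fun x hx => ?_) hall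
  simp only [mem_compl_iff, mem_ofPred_eq]
  intro hxall
  let O : Set (E n) := ⋃ p ∈ {p : ℕ × Fin n | x ∈ A p.1 p.2}, T p.1 ⁻¹' axisCone κ p.2
  obtain ⟨w, hw, hwO⟩ := exists_unit_forall_mem (O := O) (by
    intro v hv
    let B := basisOfLinearIndependentOfCardEqFinrank hv (by simp)
    let T₀ : E n →L[ℝ] (Fin n → ℝ) := LinearMap.toContinuousLinearMap B.equivFun.toLinearMap
    have hT₀ : ∀ i, T₀ (v i) ∈ axisCone κ i := by
      intro i
      have : T₀ (v i) = Pi.single i 1 := by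
        have hBv : B i = v i := by simp [B]
        rw [← hBv]
        ext l
        simp [T₀, Pi.single_apply, eq_comm]
      rw [this]
      refine ⟨by simp, fun l hl => by simp [hl, hκ0]⟩
    have hopen : IsOpen {S : E n →L[ℝ] (Fin n → ℝ) | ∀ i, S (v i) ∈ axisCone κ i} := by
      rw [ofPred_forall]
      exact isOpen_iInter_of_finite fun i =>
        (isOpen_axisCone κ i).preimage (ContinuousLinearMap.apply ℝ _ (v i)).continuous
    obtain ⟨j, hS⟩ :=
      (TopologicalSpace.denseRange_denseSeq _).exists_mem_open hopen ⟨T₀, hT₀⟩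
    obtain ⟨i, hi⟩ := mem_iUnion.1 ((hAU j).symm ▸ mem_univ x)
    exact ⟨i, mem_biUnion (x := (j, i)) hi (hS i)⟩)
  have hbound : ∀ k : ℕ, ∃ u : E n, ‖u‖ = 1 ∧
      lipAt (fun y => ⟪φ y, u⟫) x ≤ C * (1 / ((k : ℝ) + 1) * L) := by
    intro k
    have hcpt : IsCompact (sphere (0 : E n) 1 ∩ {v | 1 / ((k : ℝ) + 1) ≤ |⟪v, w⟫|}) :=
      (isCompact_sphere _ _).inter_right
        (isClosed_le continuous_const (continuous_id.inner continuous_const).abs)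
    obtain ⟨F, hFA, hFfin, hF⟩ := hcpt.elim_finite_subcover_image
      (b := {p : ℕ × Fin n | x ∈ A p.1 p.2}) (c := fun p => T p.1 ⁻¹' axisCone κ p.2)
      (fun p _ => (isOpen_axisCone κ p.2).preimage (T p.1).continuous)
      (fun v hv => hwO v (by
        have := (Nat.one_div_pos_of_nat (α := ℝ) (n := k)).trans_le hv.2
        exact abs_pos.1 this))
    refine hxall hFfin.toFinset k (mem_iInter₂.2 fun p hp => hFA (hFfin.mem_toFinset.1 hp))
      ⟨w, hw, fun v hv hvw => ?_⟩
    obtain ⟨p, hp, hpv⟩ := mem_iUnion₂.1 (hF ⟨mem_sphere_zero_iff_norm.2 hv, hvw⟩)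
    exact ⟨p, hFfin.mem_toFinset.2 hp, hpv⟩
  obtain ⟨k, hk⟩ := (mem_indSet_iff hφ).1 hx
  obtain ⟨m, hm⟩ := exists_nat_one_div_lt (show 0 < 1 / ((k : ℝ) + 1) / (C * L + 1) by positivity)
  obtain ⟨u, hu, hum⟩ := hbound m
  have hk' := (hk u hu).trans hum
  rw [lt_div_iff₀ (by positivity)] at hm
  have hm0 : (0 : ℝ) < 1 / ((m : ℝ) + 1) := Nat.one_div_pos_of_nat
  nlinarith

/-- Every family of measurable sets contains a sequence whose union almost covers each member. -/
lemma exists_seq_measure_diff_eq_zero {α ι : Type*} [MeasurableSpace α] (μ : Measure α)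
    [SFinite μ] [Nonempty ι] {S : ι → Set α} (hS : ∀ i, MeasurableSet (S i)) :
    ∃ f : ℕ → ι, ∀ i, μ (S i \ ⋃ k, S (f k)) = 0 := by
  obtain ⟨ν, hν, hμν, -⟩ := exists_isFiniteMeasure_absolutelyContinuous μ
  let V : Set ℝ≥0∞ := range fun f : ℕ → ι => ν (⋃ k, S (f k))
  obtain ⟨u, -, hu, huV⟩ :=
    exists_seq_tendsto_sSup (S := V) (range_nonempty _) (OrderTop.bddAbove V)
  choose F hF using huV
  let f : ℕ → ι := fun p => F p.unpair.1 p.unpair.2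
  have hf : ∀ m, u m ≤ ν (⋃ k, S (f k)) := by
    intro m
    rw [← hF m]
    refine measure_mono (iUnion_subset fun k => ?_)
    refine subset_iUnion_of_subset (Nat.pair m k) ?_
    simp [f]
  have hmax : sSup V ≤ ν (⋃ k, S (f k)) := le_of_tendsto' hu hf
  refine ⟨f, fun i => hμν ?_⟩
  let g : ℕ → ι := fun k => Nat.casesOn k i f
  have hg : (⋃ k, S (g k)) = S i ∪ ⋃ k, S (f k) := by
    rw [← union_iUnion_nat_succ]
    rfl
  have hle : ν (S i ∪ ⋃ k, S (f k)) ≤ ν (⋃ k, S (f k)) := by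
    rw [← hg]
    exact (le_sSup (mem_range_self g)).trans hmax
  rw [← union_sdiff_right,
    measure_sdiff subset_union_right (MeasurableSet.iUnion fun k => hS _).nullMeasurableSet
      (measure_ne_top ν _)]
  exact tsub_eq_zero_of_le hle

lemma tendsto_abs_div_dist_iff {u : X → ℝ} {x : X} (hu : u x = 0) :
    Tendsto (fun y => |u y| / dist y x) (𝓝[≠] x) (𝓝 0) ↔ u =o[𝓝 x] fun y => dist y x := by
  have h1 : u =o[𝓝 x] (fun y => dist y x) ↔ u =o[𝓝[≠] x] (fun y => dist y x) := by
    rw [← Asymptotics.isLittleO_insert (s := {x}ᶜ) hu]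
    simp [← union_singleton]
  rw [h1, ← Asymptotics.isLittleO_abs_left, Asymptotics.isLittleO_iff_tendsto']
  filter_upwards [eventually_mem_nhdsWithin] with y hy h0
  exact absurd (dist_eq_zero.1 h0) hy

/-- The map into `ℝⁿ⁺¹` with first coordinate `f` and remaining coordinates `φ`. -/
def consMap {Y : Type*} {n : ℕ} (f : Y → ℝ) (φ : Y → E n) : Y → E (n + 1) :=
  fun y => WithLp.toLp 2 (Fin.cons (f y) (φ y))

lemma exists_lipschitzWith_consMap {n : ℕ} {f : X → ℝ} {φ : X → E n} {K L : ℝ≥0}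
    (hf : LipschitzWith K f) (hφ : LipschitzWith L φ) : ∃ M, LipschitzWith M (consMap f φ) := by
  refine ⟨_, (PiLp.lipschitzWith_toLp 2 _).comp (LipschitzWith.of_dist_le_mul (K := max K L)
    fun y z => (dist_pi_le_iff (by positivity)).2 fun i => ?_)⟩
  refine Fin.cases ?_ (fun i => ?_) i
  · refine (hf.dist_le_mul y z).trans ?_
    gcongr
    exact le_max_left _ _
  · have h1 : dist (φ y i) (φ z i) ≤ dist (φ y) (φ z) := by
      rw [dist_eq_norm, dist_eq_norm]
      exact PiLp.norm_apply_le (φ y - φ z) i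
    refine (h1.trans (hφ.dist_le_mul y z)).trans ?_
    gcongr
    exact le_max_right _ _

lemma inner_consMap {Y : Type*} {n : ℕ} (f : Y → ℝ) (φ : Y → E n) (D : E (n + 1)) (y : Y) :
    ⟪consMap f φ y, D⟫ = D 0 * f y + ⟪φ y, WithLp.toLp 2 fun i => D i.succ⟫ := by
  simp [consMap, PiLp.inner_apply, Fin.sum_univ_succ]

/-- Where `φ` is independent but `(f, φ)` is not, `f` is differentiable with respect to `φ`. -/
lemma diffWrtAt_of_notMem_indSet {n : ℕ} {f : X → ℝ} {φ : X → E n} {K L : ℝ≥0}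
    (hf : LipschitzWith K f) (hφ : LipschitzWith L φ) {x : X} (hx : x ∈ indSet φ)
    (hx' : x ∉ indSet (consMap f φ)) : DiffWrtAt φ f x := by
  obtain ⟨M, hM⟩ := exists_lipschitzWith_consMap hf hφ
  have hne : ∀ w : E n, ‖w‖ = 1 →
      ¬ (fun y => ⟪φ y, w⟫ - ⟪φ x, w⟫) =o[𝓝 x] fun y => dist y x := fun w hw hlo =>
    absurd (hx w hw) (not_lt.2 ((lipAt_le_zero_iff (lipschitzWith_inner hφ w)).2 hlo))
  simp only [indSet, mem_ofPred_eq, not_forall, not_lt] at hx'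
  obtain ⟨D, hD, hD0⟩ := hx'
  rw [lipAt_le_zero_iff (lipschitzWith_inner hM D)] at hD0
  simp only [inner_consMap] at hD0
  set D' : E n := WithLp.toLp 2 fun i => D i.succ with hD'
  have hd : D 0 ≠ 0 := by
    intro h0
    refine hne D' ?_ (by simpa [h0] using hD0)
    rw [EuclideanSpace.norm_eq, Fin.sum_univ_succ] at hD
    rw [EuclideanSpace.norm_eq]
    simpa [h0] using hD
  set L₀ : E n →ₗ[ℝ] ℝ := (-(D 0)⁻¹) • (innerSL ℝ D').toLinearMap with hL₀
  have hdiff : (fun y => f y - f x - L₀ (φ y - φ x)) =o[𝓝 x] fun y => dist y x := by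
    refine (hD0.const_mul_left (D 0)⁻¹).congr_left fun y => ?_
    simp only [hL₀, LinearMap.smul_apply, ContinuousLinearMap.coe_coe, innerSL_apply_apply,
      smul_eq_mul, inner_sub_right, real_inner_comm D']
    field_simp
    ring
  refine ⟨L₀, (tendsto_abs_div_dist_iff (by simp)).2 hdiff, fun L' hL' => ?_⟩
  have hsub := ((tendsto_abs_div_dist_iff (by simp)).1 hL').sub hdiff
  by_contra hLL
  set m : E n := (InnerProductSpace.toDual ℝ (E n)).symm (L₀ - L').toContinuousLinearMap with hm
  have hmv : ∀ v, ⟪v, m⟫ = L₀ v - L' v := fun v => by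
    rw [real_inner_comm, hm, InnerProductSpace.toDual_symm_apply]
    rfl
  have hm0 : m ≠ 0 := by
    intro h0
    refine hLL (LinearMap.ext fun v => ?_)
    have := hmv v
    rw [h0, inner_zero_right] at this
    linarith
  refine hne (‖m‖⁻¹ • m) (norm_smul_inv_norm (𝕜 := ℝ) hm0)
    ((hsub.const_mul_left ‖m‖⁻¹).congr_left fun y => ?_)
  simp only [inner_smul_right, hmv, map_sub]
  ring

/-- A Lipschitz map into `ℝⁿ`, together with `n`, for some `n` satisfying `P`. -/
structure LipChart (X : Type*) [MetricSpace X] (P : ℕ → Prop) where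
  /-- The dimension of the chart. -/
  dim : ℕ
  dim_spec : P dim
  /-- The chart map. -/
  map : X → E dim
  lipschitz : ∃ K, LipschitzWith K map

/-- If independence is impossible above a bounded set of dimensions, the space is a Lipschitz
differentiability space with charts in these dimensions. -/
lemma isLipDiffSpaceWith_of_measure_indSet [MeasurableSpace X] [BorelSpace X] {μ : Measure X}
    [SigmaFinite μ] {P : ℕ → Prop} (hP0 : P 0) (hP : ∃ n, ¬ P n)
    (h : ∀ n, ¬ P n → ∀ (φ : X → E n) (L : ℝ≥0), LipschitzWith L φ → μ (indSet φ) = 0) :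
    IsLipDiffSpaceWith μ P := by
  classical
  let ι : ℕ → Type _ := fun n => {φ : X → E n // ∃ K, LipschitzWith K φ}
  have hne : ∀ n, Nonempty (ι n) := fun n => ⟨⟨fun _ => 0, 0, LipschitzWith.const _⟩⟩
  have hmeas : ∀ n (φ : ι n), MeasurableSet (indSet φ.1) := fun n φ =>
    measurableSet_indSet φ.2.choose_spec
  choose Φ hΦ using fun n => exists_seq_measure_diff_eq_zero μ (hmeas n)
  let W : ℕ → Set X := fun n => if P n then ⋃ k, indSet (Φ n k).1 else ∅
  have hWm : ∀ n, MeasurableSet (W n) := by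
    intro n
    by_cases hn : P n
    · simpa [W, hn] using MeasurableSet.iUnion fun k => hmeas n (Φ n k)
    · simp [W, hn]
  have hW : ∀ n (φ : X → E n) (L : ℝ≥0), LipschitzWith L φ → μ (indSet φ \ W n) = 0 := by
    intro n φ L hφ
    by_cases hn : P n
    · simpa [W, hn] using hΦ n ⟨φ, L, hφ⟩
    · simpa [W, hn] using h n hn φ L hφ
  let chart : ℕ → ℕ → LipChart X P := fun n k =>
    if hn : P n then ⟨n, hn, (Φ n k).1, (Φ n k).2⟩
    else ⟨0, hP0, fun _ => 0, 0, LipschitzWith.const _⟩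
  let U : ℕ → ℕ → Set X := fun n k => if P n then indSet (Φ n k).1 \ W (n + 1) else ∅
  have hUm : ∀ n k, MeasurableSet (U n k) := by
    intro n k
    by_cases hn : P n
    · simpa [U, hn] using (hmeas n (Φ n k)).diff (hWm (n + 1))
    · simp [U, hn]
  refine ⟨fun p => (chart p.unpair.1 p.unpair.2).dim, fun p => U p.unpair.1 p.unpair.2,
    fun p => (chart p.unpair.1 p.unpair.2).map, fun p => LipChart.dim_spec _, fun p => hUm _ _, ?_,
    fun p => LipChart.lipschitz _, fun f hf p => ?_⟩
  · refine eq_univ_of_forall fun x => ?_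
    have hex : ∃ n, x ∈ W n ∧ x ∉ W (n + 1) := by
      by_contra! hcon
      have hall : ∀ n, x ∈ W n := fun n => by
        induction n with
        | zero =>
          simp only [W, hP0, if_true]
          refine mem_iUnion.2 ⟨0, fun D hD => ?_⟩
          simp [Subsingleton.elim D 0] at hD
        | succ n ih => exact hcon n ih
      obtain ⟨n, hn⟩ := hP
      simpa [W, hn] using hall n
    obtain ⟨n, hxn, hxn'⟩ := hex
    have hn : P n := by
      by_contra hn
      simp [W, hn] at hxn
    simp only [W, hn, if_true] at hxn
    obtain ⟨k, hk⟩ := mem_iUnion.1 hxn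
    refine mem_iUnion.2 ⟨Nat.pair n k, ?_⟩
    simp only [Nat.unpair_pair, U, hn, if_true]
    exact ⟨hk, hxn'⟩
  · have key : ∀ n k, ∀ᵐ x ∂μ, x ∈ U n k → DiffWrtAt (chart n k).map f x := by
      intro n k
      obtain ⟨K, hK⟩ := hf
      by_cases hn : P n
      · have hc : chart n k = ⟨n, hn, (Φ n k).1, (Φ n k).2⟩ := dif_pos hn
        rw [hc]
        simp only [U, hn, if_true]
        obtain ⟨L, hL⟩ := (Φ n k).2
        obtain ⟨M, hM⟩ := exists_lipschitzWith_consMap hK hL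
        have hnull := hW (n + 1) _ M hM
        filter_upwards [measure_eq_zero_iff_ae_notMem.1 hnull] with x hx hxU
        exact diffWrtAt_of_notMem_indSet hK hL hxU.1 fun hmem => hx ⟨hmem, hxU.2⟩
      · simp [U, hn]
    exact key _ _

variable {X : Type*} [MetricSpace X] [CompleteSpace X] [TopologicalSpace.SeparableSpace X]
  [MeasurableSpace X] [BorelSpace X]

/-- If `dim_H X < ∞` and there is `C ≥ 1` such that `Lip(f,·) ≤ C ρ`
`μ`-a.e. for every Lipschitz `f : X → ℝ` and every Borel upper gradient `ρ` of `f`, then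
`(X,d,μ)` is a Lipschitz differentiability space with chart dimensions at most `dim_H X`. -/
theorem cheeger_via_upper_gradients (μ : Measure X) [SigmaFinite μ]
    (hdim : dimH (Set.univ : Set X) < ⊤) (C : ℝ) (hC : 1 ≤ C)
    (h : ∀ f : X → ℝ, (∃ K, LipschitzWith K f) → ∀ ρ : X → ℝ, Measurable ρ →
      IsUpperGradient f ρ → ∀ᵐ x ∂μ, lipAt f x ≤ C * ρ x) :
    IsLipDiffSpaceWith μ (fun k => (k : ℝ≥0∞) ≤ dimH (Set.univ : Set X)) := by
  obtain ⟨n, hn⟩ := ENNReal.exists_nat_gt hdim.ne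
  exact isLipDiffSpaceWith_of_measure_indSet (by simp) ⟨n, not_le.2 hn⟩
    fun m hm φ L hφ => measure_indSet_eq_zero (zero_le_one.trans hC) h (not_le.1 hm) hφ

end BKO
end
end

section
/- Let X be a metric space and K ⊂ Γ(X) a compact set of curve fragments. Then the set 𝒩(K) = {m ∈ 𝓜(X) : there exists ℙ ∈ 𝓟(K) with m ≤ ν(ℙ)} is convex and compact with respect to weak* convergence of measures. -/
open MeasureTheory Metric Set Filter Topology ENNReal NNReal
open scoped RealInnerProductSpace

noncomputable section

namespace BKO

variable {X : Type*} [MetricSpace X]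

variable {X : Type*} [MetricSpace X] [MeasurableSpace X] [BorelSpace X]

theorem FiniteMeasure.le_iff_forall_testAgainstNN {Y : Type*} [PseudoEMetricSpace Y]
    [MeasurableSpace Y] [BorelSpace Y] {μ ν : FiniteMeasure Y} :
    (μ : Measure Y) ≤ ν ↔ ∀ f : BoundedContinuousFunction Y ℝ≥0,
      μ.testAgainstNN f ≤ ν.testAgainstNN f := by
  refine ⟨fun h f => ?_, fun h => ?_⟩
  · rw [← ENNReal.coe_le_coe, FiniteMeasure.testAgainstNN_coe_eq, FiniteMeasure.testAgainstNN_coe_eq]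
    exact lintegral_mono' h le_rfl
  have closed_le : ∀ F : Set Y, IsClosed F → (μ : Measure Y) F ≤ (ν : Measure Y) F := by
    intro F hF
    refine ge_of_tendsto' (HasOuterApproxClosed.tendsto_lintegral_apprSeq hF (ν : Measure Y))
      fun n => (HasOuterApproxClosed.measure_le_lintegral hF (μ : Measure Y) n).trans ?_
    rw [← FiniteMeasure.testAgainstNN_coe_eq, ← FiniteMeasure.testAgainstNN_coe_eq]
    exact ENNReal.coe_le_coe.2 (h _)
  refine Measure.le_iff.2 fun s hs => ?_
  rw [hs.measure_eq_iSup_isClosed_of_ne_top (measure_ne_top _ _)]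
  exact iSup₂_le fun F hFs => iSup_le fun hF => (closed_le F hF).trans (measure_mono hFs)

theorem FiniteMeasure.isClosed_setOf_toMeasure_le (Y : Type*) [PseudoEMetricSpace Y]
    [MeasurableSpace Y] [BorelSpace Y] :
    IsClosed {p : FiniteMeasure Y × FiniteMeasure Y | (p.1 : Measure Y) ≤ p.2} := by
  simp only [FiniteMeasure.le_iff_forall_testAgainstNN, ofPred_forall]
  exact isClosed_iInter fun f => isClosed_le
    ((FiniteMeasure.continuous_testAgainstNN_eval f).comp continuous_fst)
    ((FiniteMeasure.continuous_testAgainstNN_eval f).comp continuous_snd)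

theorem exists_le_map_eq_of_le_map {α β : Type*} [MeasurableSpace α] [MeasurableSpace β]
    {f : α → β} (hf : Measurable f) {ρ : Measure α} [IsFiniteMeasure ρ] {μ : Measure β}
    (h : μ ≤ ρ.map f) : ∃ σ ≤ ρ, σ.map f = μ := by
  have : IsFiniteMeasure μ := isFiniteMeasure_of_le _ h
  refine ⟨ρ.withDensity (μ.rnDeriv (ρ.map f) ∘ f), ?_, ?_⟩
  · calc ρ.withDensity (μ.rnDeriv (ρ.map f) ∘ f) ≤ ρ.withDensity 1 :=
          withDensity_mono (ae_of_ae_map hf.aemeasurable (Measure.rnDeriv_le_one_of_le h))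
      _ = ρ := withDensity_one
  · conv_rhs => rw [← Measure.withDensity_rnDeriv_eq μ (ρ.map f) h.absolutelyContinuous]
    ext s hs
    rw [Measure.map_apply hf hs, withDensity_apply _ (hf hs), withDensity_apply _ hs,
      setLIntegral_map hs (Measure.measurable_rnDeriv _ _) hf]
    rfl

theorem le_comap_subtype_val_iff {α : Type*} [MeasurableSpace α] {s : Set α}
    (hs : MeasurableSet s) {σ : Measure s} {μ : Measure α} :
    σ ≤ μ.comap Subtype.val ↔ σ.map Subtype.val ≤ μ := by
  have emb := MeasurableEmbedding.subtype_coe hs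
  refine ⟨fun h => ?_, fun h => Measure.le_iff.2 fun t ht => ?_⟩
  · calc σ.map Subtype.val ≤ (μ.comap Subtype.val).map Subtype.val :=
          Measure.map_mono h emb.measurable
      _ = μ.restrict s := map_comap_subtype_coe hs μ
      _ ≤ μ := Measure.restrict_le_self
  · calc σ t = σ.map Subtype.val (Subtype.val '' t) := by
          rw [emb.map_apply, Subtype.val_injective.preimage_image]
      _ ≤ μ (Subtype.val '' t) := h _
      _ = μ.comap Subtype.val t := (emb.comap_apply μ t).symm

namespace Fragment

omit [MeasurableSpace X] [BorelSpace X] in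
theorem mk_fn_mem_graph (γ : Fragment X) {t : ℝ} (ht : t ∈ γ.dom) : (t, γ.fn t) ∈ γ.graph := by
  obtain ⟨⟨s, x⟩, hp, rfl⟩ := ht
  have h : ∃ x, (s, x) ∈ γ.graph := ⟨x, hp⟩
  rw [fn, dif_pos h]
  exact h.choose_spec

omit [MeasurableSpace X] [BorelSpace X] in
theorem exists_mem_graph_dist_lt {γ γ' : Fragment X} {r : ℝ} (h : dist γ γ' < r) {p : ℝ × X}
    (hp : p ∈ γ.graph) : ∃ q ∈ γ'.graph, dist p q < r :=
  exists_dist_lt_of_hausdorffDist_lt hp h (hausdorffEDist_ne_top_of_nonempty_of_bounded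
    γ.1.nonempty γ'.1.nonempty γ.1.isCompact.isBounded γ'.1.isCompact.isBounded)

omit [MeasurableSpace X] [BorelSpace X] in
theorem dist_fn_le {γ γ' : Fragment X} {t t' : ℝ} (ht : t ∈ γ.dom) (ht' : t' ∈ γ'.dom) :
    dist (γ.fn t) (γ'.fn t') ≤ 3 * dist γ γ' + 2 * dist t t' := by
  refine le_of_forall_pos_le_add fun ε hε => ?_
  obtain ⟨⟨s, y⟩, hq, hlt⟩ := exists_mem_graph_dist_lt (γ' := γ')
    (lt_add_of_pos_right (dist γ γ') (show 0 < ε / 3 by positivity)) (γ.mk_fn_mem_graph ht)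
  have h := (γ'.2.2 _ hq _ (γ'.mk_fn_mem_graph ht')).2
  obtain ⟨hs, hy⟩ := max_lt_iff.1 hlt
  have h1 := dist_triangle (γ.fn t) y (γ'.fn t')
  have h2 := dist_triangle s t t'
  rw [dist_comm s t] at h2
  simp only [← Real.dist_eq] at h
  simp only at hs hy h
  linarith

variable (X) in
/-- The pairs consisting of a curve fragment and a point of its domain. -/
def pointed : Set (Fragment X × ℝ) := {p | p.2 ∈ p.1.dom}

omit [MeasurableSpace X] [BorelSpace X] in
theorem isCompact_dom (γ : Fragment X) : IsCompact γ.dom := γ.1.isCompact.image continuous_fst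

omit [MeasurableSpace X] [BorelSpace X] in
theorem dom_subset_Icc (γ : Fragment X) : γ.dom ⊆ Icc 0 1 := by
  rintro _ ⟨p, hp, rfl⟩
  exact γ.2.1 p hp

omit [MeasurableSpace X] [BorelSpace X] in
theorem isClosed_pointed : IsClosed (pointed X) := by
  refine isClosed_of_closure_subset fun p hp => ?_
  refine p.1.isCompact_dom.isClosed.closure_subset (Metric.mem_closure_iff.2 fun ε hε => ?_)
  obtain ⟨⟨γ, t⟩, ht, hlt⟩ := Metric.mem_closure_iff.1 hp (ε / 2) (half_pos hε)
  obtain ⟨hγ, htt⟩ := max_lt_iff.1 hlt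
  rw [dist_comm] at hγ
  obtain ⟨q, hq, hlt⟩ := exists_mem_graph_dist_lt hγ (γ.mk_fn_mem_graph ht)
  refine ⟨q.1, ⟨q, hq, rfl⟩, ?_⟩
  have h := (max_lt_iff.1 hlt).1
  have h2 := dist_triangle p.2 t q.1
  simp only at htt h
  linarith

omit [MeasurableSpace X] [BorelSpace X] in
theorem continuousOn_fn_pointed :
    ContinuousOn (fun p : Fragment X × ℝ => p.1.fn p.2) (pointed X) := by
  refine LipschitzOnWith.continuousOn (K := 5) (LipschitzOnWith.of_dist_le_mul fun p hp q hq => ?_)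
  refine (dist_fn_le hp hq).trans ?_
  have h1 : dist p.1 q.1 ≤ dist p q := le_max_left _ _
  have h2 : dist p.2 q.2 ≤ dist p q := le_max_right _ _
  push_cast
  linarith

theorem measurableSet_pointed_inter_fn_preimage {B : Set X} (hB : MeasurableSet B) :
    MeasurableSet (pointed X ∩ (fun p : Fragment X × ℝ => p.1.fn p.2) ⁻¹' B) := by
  have h := (continuousOn_iff_continuous_domRestrict.1
    (continuousOn_fn_pointed (X := X))).measurable hB
  have h2 := isClosed_pointed (X := X).measurableSet.subtype_image h
  rwa [domRestrict_eq, preimage_comp, Subtype.image_preimage_coe] at h2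

omit [MeasurableSpace X] [BorelSpace X] in
theorem continuousOn_fn_dom (γ : Fragment X) : ContinuousOn γ.fn γ.dom :=
  continuousOn_fn_pointed.comp (f := fun t => (γ, t)) (by fun_prop) fun _ ht => ht

theorem measure_apply (γ : Fragment X) {B : Set X} (hB : MeasurableSet B) :
    γ.measure B = volume (Prod.mk γ ⁻¹'
      (pointed X ∩ (fun p : Fragment X × ℝ => p.1.fn p.2) ⁻¹' B)) := by
  have hd := γ.isCompact_dom.measurableSet
  rw [measure, Measure.map_apply_of_aemeasurable (γ.continuousOn_fn_dom.aemeasurable hd) hB,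
    Measure.restrict_apply' hd, inter_comm]
  rfl

theorem measurable_measure : Measurable (measure : Fragment X → Measure X) := by
  refine Measure.measurable_of_measurable_coe _ fun B hB => ?_
  simp only [measure_apply _ hB]
  exact measurable_measure_prodMk_left (measurableSet_pointed_inter_fn_preimage hB)

end Fragment

theorem nu_add_smul (a b : ℝ≥0) (P Q : Measure (Fragment X)) :
    nu (a • P + b • Q) = a • nu P + b • nu Q := by
  ext B hB
  simp only [nu, Measure.add_apply, Measure.smul_apply,
    Measure.bind_apply hB Fragment.measurable_measure.aemeasurable, lintegral_add_measure,
    lintegral_smul_measure]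

section CompactFamily

variable {K : Set (Fragment X)}

/-- The pairs consisting of a curve fragment in `K` and a point of its domain, as a subset of
`K × [0,1]`. -/
def pointedOn (K : Set (Fragment X)) : Set (K × unitInterval) := {p | (p.2 : ℝ) ∈ p.1.1.dom}

/-- Evaluation `(γ, t) ↦ γ t`. -/
def evalOn (K : Set (Fragment X)) (z : pointedOn K) : X := z.1.1.1.fn z.1.2

omit [MeasurableSpace X] [BorelSpace X] in
theorem isClosed_pointedOn (K : Set (Fragment X)) : IsClosed (pointedOn K) :=
  Fragment.isClosed_pointed.preimage
    (f := fun p : K × unitInterval => ((p.1 : Fragment X), (p.2 : ℝ))) (by fun_prop)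

omit [MeasurableSpace X] [BorelSpace X] in
theorem continuous_evalOn (K : Set (Fragment X)) : Continuous (evalOn K) :=
  Fragment.continuousOn_fn_pointed.comp_continuous
    (f := fun z : pointedOn K => ((z.1.1 : Fragment X), (z.1.2 : ℝ))) (by fun_prop) fun z => z.2

theorem nu_map_subtype_val (hK : IsClosed K) (P : Measure K) :
    nu (P.map Subtype.val) =
      ((P.prod (volume : Measure unitInterval)).comap
        (Subtype.val : pointedOn K → K × unitInterval)).map (evalOn K) := by
  ext B hB
  have hZ := MeasurableEmbedding.subtype_coe (isClosed_pointedOn K).measurableSet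
  have hev := (continuous_evalOn K).measurable
  rw [Measure.map_apply hev hB, hZ.comap_apply,
    Measure.prod_apply (hZ.measurableSet_image.2 (hev hB)),
    nu, Measure.bind_apply hB Fragment.measurable_measure.aemeasurable,
    (MeasurableEmbedding.subtype_coe hK.measurableSet).lintegral_map]
  refine lintegral_congr fun k => ?_
  rw [Fragment.measure_apply _ hB, unitInterval.volume_apply]
  congr 1
  ext t
  simp only [mem_preimage, mem_inter_iff, mem_image, Subtype.exists]
  refine ⟨fun ⟨ht, htB⟩ => ?_, ?_⟩
  · exact ⟨t, k.1.dom_subset_Icc ht, ⟨(k, ⟨t, k.1.dom_subset_Icc ht⟩), ht, htB, rfl⟩, rfl⟩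
  · rintro ⟨_, _, ⟨_, hz, hzB, rfl⟩, rfl⟩
    exact ⟨hz, hzB⟩

/-- The pairs of a measure on the pointed fragments in `K` and a probability measure on `K` whose
product with Lebesgue measure dominates it. -/
def dominatedPairs (K : Set (Fragment X)) :
    Set (FiniteMeasure (pointedOn K) × ProbabilityMeasure K) :=
  {p | (p.1 : Measure (pointedOn K)).map Subtype.val ≤ (p.2 : Measure K).prod volume}

omit [MeasurableSpace X] [BorelSpace X] in
theorem measure_univ_le_one_of_mem_dominatedPairs
    {p : FiniteMeasure (pointedOn K) × ProbabilityMeasure K} (h : p ∈ dominatedPairs K) :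
    (p.1 : Measure (pointedOn K)) univ ≤ 1 := by
  calc (p.1 : Measure (pointedOn K)) univ
      = (p.1 : Measure (pointedOn K)).map Subtype.val univ := by
        rw [Measure.map_apply measurable_subtype_coe MeasurableSet.univ, preimage_univ]
    _ ≤ (p.2 : Measure K).prod volume univ := h univ
    _ = 1 := measure_univ

omit [MeasurableSpace X] [BorelSpace X] in
theorem isCompact_dominatedPairs (hK : IsCompact K) : IsCompact (dominatedPairs K) := by
  have : CompactSpace K := isCompact_iff_compactSpace.1 hK
  have : CompactSpace (pointedOn K) :=
    isCompact_iff_compactSpace.1 (isClosed_pointedOn K).isCompact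
  have hsub : dominatedPairs K ⊆ {μ : FiniteMeasure (pointedOn K) | μ.mass ≤ 1} ×ˢ univ := by
    rintro ⟨σ, P⟩ h
    refine ⟨?_, mem_univ _⟩
    have h1 := measure_univ_le_one_of_mem_dominatedPairs h
    rwa [mem_ofPred_eq, ← ENNReal.coe_le_coe, FiniteMeasure.ennreal_mass, ENNReal.coe_one]
  refine ((isCompact_setOfPred_finiteMeasure_le_of_compactSpace (pointedOn K) 1).prod
    isCompact_univ).of_isClosed_subset ?_ hsub
  let vol : ProbabilityMeasure unitInterval := ⟨volume, inferInstance⟩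
  have hcont : Continuous fun p : FiniteMeasure (pointedOn K) × ProbabilityMeasure K =>
      (p.1.map Subtype.val, (p.2.prod vol).toFiniteMeasure) := by
    refine ((FiniteMeasure.continuous_map continuous_subtype_val).comp continuous_fst).prodMk ?_
    exact ProbabilityMeasure.toFiniteMeasure_continuous.comp
      (ProbabilityMeasure.continuous_prod.comp (continuous_snd.prodMk continuous_const))
  exact (FiniteMeasure.isClosed_setOf_toMeasure_le _).preimage hcont

theorem image_dominatedPairs (hK : IsClosed K) :
    (fun p : FiniteMeasure (pointedOn K) × ProbabilityMeasure K => p.1.map (evalOn K)) ''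
      dominatedPairs K = {m : FiniteMeasure X | (m : Measure X) Set.univ ≤ 1 ∧
        ∃ ℙ : Measure (Fragment X), IsProbabilityMeasure ℙ ∧ ℙ Kᶜ = 0 ∧
          (m : Measure X) ≤ nu ℙ} := by
  have hev := (continuous_evalOn K).measurable
  have hZ := (isClosed_pointedOn K).measurableSet
  have hKe := MeasurableEmbedding.subtype_coe hK.measurableSet
  ext m
  constructor
  · rintro ⟨⟨σ, P⟩, h, rfl⟩
    refine ⟨?_, (P : Measure K).map Subtype.val,
      Measure.isProbabilityMeasure_map measurable_subtype_coe.aemeasurable, ?_, ?_⟩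
    · have h1 := measure_univ_le_one_of_mem_dominatedPairs h
      rwa [FiniteMeasure.toMeasure_map, Measure.map_apply hev MeasurableSet.univ, preimage_univ]
    · rw [hKe.map_apply, preimage_compl, Subtype.coe_preimage_self, compl_univ, measure_empty]
    · rw [nu_map_subtype_val hK, FiniteMeasure.toMeasure_map]
      exact Measure.map_mono ((le_comap_subtype_val_iff hZ).2 h) hev
  · rintro ⟨-, ℙ, _, hℙ, hm⟩
    have hmap : (ℙ.comap (Subtype.val : K → Fragment X)).map Subtype.val = ℙ := by
      rw [map_comap_subtype_coe hK.measurableSet]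
      exact Measure.restrict_eq_self_of_ae_mem hℙ
    have hP : IsProbabilityMeasure (ℙ.comap (Subtype.val : K → Fragment X)) := by
      refine ⟨?_⟩
      rw [hKe.comap_apply, image_univ, Subtype.range_coe,
        (prob_compl_eq_zero_iff hK.measurableSet).1 hℙ]
    rw [← hmap, nu_map_subtype_val hK] at hm
    have : IsFiniteMeasure (((ℙ.comap (Subtype.val : K → Fragment X)).prod
        (volume : Measure unitInterval)).comap
        (Subtype.val : pointedOn K → K × unitInterval)) := by
      refine ⟨?_⟩
      rw [(MeasurableEmbedding.subtype_coe hZ).comap_apply]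
      exact measure_lt_top _ _
    obtain ⟨σ, hσ, hσm⟩ := exists_le_map_eq_of_le_map hev hm
    exact ⟨(⟨σ, isFiniteMeasure_of_le _ hσ⟩, ⟨_, hP⟩), (le_comap_subtype_val_iff hZ).1 hσ,
      Subtype.ext hσm⟩

end CompactFamily

/-- For compact `K ⊆ Γ(X)`, the set
`𝒩(K) = {m ∈ 𝓜(X) : ∃ ℙ ∈ 𝓟(K), m ≤ ν(ℙ)}` of measures of total mass at most `1`
dominated by some `ν(ℙ)` with `ℙ` a probability measure concentrated on `K`
is convex and compact in the weak* topology. -/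
theorem convex_isCompact_N (K : Set (Fragment X)) (hK : IsCompact K) :
    Convex ℝ≥0 {m : FiniteMeasure X | (m : Measure X) Set.univ ≤ 1 ∧
        ∃ ℙ : Measure (Fragment X), IsProbabilityMeasure ℙ ∧ ℙ Kᶜ = 0 ∧
          (m : Measure X) ≤ nu ℙ} ∧
    IsCompact {m : FiniteMeasure X | (m : Measure X) Set.univ ≤ 1 ∧
        ∃ ℙ : Measure (Fragment X), IsProbabilityMeasure ℙ ∧ ℙ Kᶜ = 0 ∧
          (m : Measure X) ≤ nu ℙ} := by
  refine ⟨?_, ?_⟩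
  · rintro m ⟨hm, P, _, hPK, hmP⟩ m' ⟨hm', P', _, hPK', hmP'⟩ a b _ _ hab
    have hab' : (a : ℝ≥0∞) + b = 1 := mod_cast hab
    refine ⟨?_, a • P + b • P', ⟨?_⟩, ?_, ?_⟩
    · calc ((a • m + b • m' : FiniteMeasure X) : Measure X) univ
          = a * (m : Measure X) univ + b * (m' : Measure X) univ := rfl
        _ ≤ a * 1 + b * 1 := by gcongr
        _ = 1 := by rw [mul_one, mul_one, hab']
    · change (a : ℝ≥0∞) * P univ + b * P' univ = 1
      rw [measure_univ, measure_univ, mul_one, mul_one, hab']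
    · simp [hPK, hPK']
    · rw [nu_add_smul]
      refine Measure.le_iff.2 fun s _ => ?_
      exact add_le_add (mul_le_mul_right (hmP s) (a : ℝ≥0∞)) (mul_le_mul_right (hmP' s) (b : ℝ≥0∞))
  · rw [← image_dominatedPairs hK.isClosed]
    exact (isCompact_dominatedPairs hK).image
      ((FiniteMeasure.continuous_map (continuous_evalOn K)).comp continuous_fst)

end BKO
end
end
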